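/- Let 2 ≤ ℓ ≤ k−1 be integers. For every ε > 0 there exists a k-graph F such that π_ℓ(F) < ε and F admits no ℓ-vanishing order. -/

import Mathlib

/-!
The `k`-graph `F` is a categorical product. Call a `k`-graph on `M` vertices flexible if every
`ℓ`-set `S` extends to an edge avoiding any prescribed vertex outside `S`, and let `F` be the
product of all flexible `k`-graphs on `Fin M`, for a large `M`.

No vanishing order (`not_vanishing_of_generic`, `prod_not_vanishing`): flexibility passes to the
product for sets of vertices that project injectively to every factor. Given an ordering `σ` of a
`k`-graph with this extension property, take a generic `ℓ`-set `S` with least maximum, an edge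
`e ⊇ S`, and an `ℓ`-set `S' ⊆ e` which contains `S` minus its minimum `v` but omits `v`. In `e` no
vertex of `S'` has rank `1`, and the colouring forces the same for an edge `e' ⊇ S'` avoiding `v`.
So `e'` has a vertex below `S'`, which yields a generic `ℓ`-set with smaller maximum.

Small density (`exists_exDeg_prod_le`): if a `k`-graph `H` has minimum `ℓ`-degree density at least
`δ > 0`, then most `M`-tuples of vertices of `H` induce a `k`-graph of minimum `ℓ`-degree density
at least `δ / 2` (`exists_samples`, by a Hoeffding bound, `card_pull_le`), and for large `M` such a
`k`-graph is flexible (`flexible_of_degS`). Some fixed flexible `G` is thus induced on a positive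
proportion of the tuples, and hence on all tuples of a large box (`exists_box`): `H` contains a
large blow-up of `G`. As `F` projects to `G`, the blow-up contains `F` (`containsCopy_prod`).

The limit defining `π_ℓ(F)` exists (`exists_hasTuranDensity`) because the same sampling lemma,
applied to extremal `k`-graphs, shows that the normalised extremal numbers are almost decreasing.
-/

open Finset Filter

variable {α : Type*} {β : Type*}

/-- `(V, E)` is a `k`-uniform hypergraph: every edge is a `k`-element subset of `V`. -/
def IsKGraph [DecidableEq α] (k : ℕ) (V : Finset α) (E : Finset (Finset α)) : Prop :=
  ∀ e ∈ E, e ⊆ V ∧ e.card = k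

/-- The degree of a vertex set `S`: the number of edges containing `S`. -/
def degS [DecidableEq α] (E : Finset (Finset α)) (S : Finset α) : ℕ :=
  (E.filter fun e => S ⊆ e).card

/-- The minimum `ℓ`-degree of a hypergraph: the minimum of `degS` over `ℓ`-subsets of `V`. -/
noncomputable def minDeg [DecidableEq α] (ℓ : ℕ) (V : Finset α) (E : Finset (Finset α)) : ℕ :=
  sInf {d | ∃ S ⊆ V, S.card = ℓ ∧ d = degS E S}

/-- The edge set of the link of `S`: `{e \ S : S ⊆ e ∈ E}`. -/
def linkE [DecidableEq α] (E : Finset (Finset α)) (S : Finset α) : Finset (Finset α) :=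
  (E.filter fun e => S ⊆ e).image fun e => e \ S

/-- The rank (1-based position) of `x` within `T` with respect to `σ`. -/
def rankIn (T : Finset α) (σ : α → ℕ) (x : α) : ℕ :=
  (T.filter fun y => σ y ≤ σ x).card

/-- `σ` is an ordering of `V`, i.e. a bijection `V → {1, …, |V|}`. -/
def IsOrdering (V : Finset α) (σ : α → ℕ) : Prop :=
  Set.BijOn σ ↑V (Set.Icc 1 V.card)

/-- `σ` is an `ℓ`-vanishing order of the `k`-graph `(V, E)`: it is an ordering of `V` and there
is a coloring `φ` of `ℓ`-sets of vertices such that for every edge `e` and every `ℓ`-subset `X`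
of `e`, `φ X` equals the set of positions that `X` occupies inside `e` under `σ`. -/
def IsVanishingOrder [DecidableEq α] (ℓ : ℕ) (V : Finset α) (E : Finset (Finset α))
    (σ : α → ℕ) : Prop :=
  IsOrdering V σ ∧
    ∃ φ : Finset α → Finset ℕ,
      ∀ e ∈ E, ∀ X ⊆ e, X.card = ℓ → φ X = X.image (rankIn e σ)

/-- The hypergraph `(VH, EH)` contains a copy of `(VF, EF)`. -/
def ContainsCopy [DecidableEq α] [DecidableEq β] (VF : Finset α) (EF : Finset (Finset α))
    (VH : Finset β) (EH : Finset (Finset β)) : Prop :=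
  ∃ f : α → β, Set.InjOn f ↑VF ∧ (∀ v ∈ VF, f v ∈ VH) ∧ ∀ e ∈ EF, e.image f ∈ EH

/-- `ex_ℓ(n, F)`: the maximum of `δ_ℓ(H)` over all `F`-free `k`-graphs `H` on `n` vertices. -/
noncomputable def exDeg [DecidableEq α] (k ℓ n : ℕ) (VF : Finset α)
    (EF : Finset (Finset α)) : ℕ :=
  sSup {d | ∃ E : Finset (Finset (Fin n)), (∀ e ∈ E, e.card = k) ∧
    ¬ ContainsCopy VF EF (Finset.univ : Finset (Fin n)) E ∧ d = minDeg ℓ Finset.univ E}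

/-- The `ℓ`-degree Turán density of the `k`-graph `F = (VF, EF)` equals `x`, i.e.
`ex_ℓ(n, F) / C(n-ℓ, k-ℓ) → x` as `n → ∞` (this limit is known to exist). -/
def HasTuranDensity [DecidableEq α] (k ℓ : ℕ) (VF : Finset α) (EF : Finset (Finset α))
    (x : ℝ) : Prop :=
  Tendsto (fun n : ℕ => (exDeg k ℓ n VF EF : ℝ) / ((n - ℓ).choose (k - ℓ) : ℝ)) atTop (nhds x)

/-- The `t`-uniform hypergraph `(V, E)` is `t`-partite: the vertices can be split into `t`
parts so that every edge contains exactly one vertex from each part. -/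
def IsPartite (t : ℕ) (V : Finset α) (E : Finset (Finset α)) : Prop :=
  ∃ P : α → Fin t, ∀ e ∈ E, ∀ i : Fin t, (e.filter fun v => P v = i).card = 1


/-! ### Hypergraphs without vanishing order -/

/-- The set of least maximum in a suitable family of `ℓ`-sets obstructs a vanishing order.
`𝒢` is a family of generic sets. Take a generic `ℓ`-set `S` whose `σ`-maximum is as small as
possible. Then every `y` extending `S` generically lies above `S`, since otherwise `y` could
replace the maximum of `S`. Extend `S` to an edge `e`, let `v` be the minimum of `S`, and pass to
an `ℓ`-set `S' ⊆ e` containing `S \ {v}` but not `v`. None of the elements of `S'` has rank `1` in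
`e`; an edge `e' ⊇ S'` that avoids `v` then must also contain a vertex below `S'`, which
contradicts the choice of `S`. -/
lemma not_vanishing_of_generic [DecidableEq α] {ℓ : ℕ} (hℓ : 2 ≤ ℓ) {V : Finset α}
    {E : Finset (Finset α)} (𝒢 : Finset α → Prop)
    (hsub : ∀ S T, T ⊆ S → 𝒢 S → 𝒢 T) (hV : ∀ S, 𝒢 S → S ⊆ V)
    (hne : ∃ S, S.card = ℓ ∧ 𝒢 S)
    (hext₀ : ∀ S, S.card = ℓ → 𝒢 S → ∃ e ∈ E, S ⊆ e ∧ ℓ < e.card ∧ 𝒢 e)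
    (hext : ∀ S u, S.card = ℓ → u ∉ S → 𝒢 (insert u S) →
      ∃ e ∈ E, S ⊆ e ∧ u ∉ e ∧ 𝒢 (insert u e)) (σ : α → ℕ) :
    ¬ IsVanishingOrder ℓ V E σ := by
  rintro ⟨hσ, φ, hφ⟩
  have hinj : ∀ a ∈ V, ∀ b ∈ V, σ a = σ b → a = b :=
    fun a ha b hb h => hσ.injOn (mem_coe.2 ha) (mem_coe.2 hb) h
  have hpos : ∀ a ∈ V, 0 < σ a := fun a ha => (hσ.mapsTo (mem_coe.2 ha)).1
  obtain ⟨S, ⟨hSc, hSG⟩, hmin⟩ : ∃ S, (S.card = ℓ ∧ 𝒢 S) ∧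
      ∀ T, T.card = ℓ → 𝒢 T → S.sup σ ≤ T.sup σ := by
    classical
    have hex : ∃ n, ∃ S, (S.card = ℓ ∧ 𝒢 S) ∧ S.sup σ = n := by
      obtain ⟨S, hS⟩ := hne
      exact ⟨_, S, hS, rfl⟩
    obtain ⟨S, hS, hn⟩ := Nat.find_spec hex
    exact ⟨S, hS, fun T h1 h2 => hn ▸ Nat.find_min' hex ⟨T, ⟨h1, h2⟩, rfl⟩⟩
  have hSne : S.Nonempty := by rw [← card_pos]; omega
  have key : ∀ y, y ∉ S → 𝒢 (insert y S) → ∀ s ∈ S, σ s < σ y := by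
    intro y hy hG s hs
    by_contra hlt
    obtain ⟨m, hm, hsup⟩ := exists_mem_eq_sup S hSne σ
    have hyV : y ∈ V := hV _ hG (mem_insert_self _ _)
    have hmV : m ∈ V := hV _ hSG hm
    have hys : σ y ≤ σ m := by
      have := le_sup (f := σ) hs
      omega
    have hcard : (insert y (S.erase m)).card = ℓ := by
      rw [card_insert_of_notMem (fun h => hy (mem_of_mem_erase h)), card_erase_of_mem hm]
      omega
    have hle := hmin _ hcard
      (hsub _ _ (insert_subset_insert y (erase_subset m S)) hG)
    have hlt' : (insert y (S.erase m)).sup σ < S.sup σ := by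
      rw [hsup, Finset.sup_lt_iff (hpos m hmV)]
      intro b hb
      rcases mem_insert.1 hb with rfl | hb
      · exact lt_of_le_of_ne hys fun h => hy (hinj _ hyV _ hmV h ▸ hm)
      · have hbS := mem_of_mem_erase hb
        have := le_sup (f := σ) hbS
        rw [hsup] at this
        exact lt_of_le_of_ne this fun h => ne_of_mem_erase hb (hinj _ (hV _ hSG hbS) _ hmV h)
    omega
  obtain ⟨e, heE, hSe, hec, heG⟩ := hext₀ S hSc hSG
  obtain ⟨v, hvS, hvmin⟩ := exists_min_image S σ hSne
  obtain ⟨z, hz⟩ : (e \ S).Nonempty := by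
    rw [← card_pos, card_sdiff_of_subset hSe]; omega
  obtain ⟨hze, hzS⟩ := mem_sdiff.1 hz
  have hzkey := key z hzS (hsub _ _ (insert_subset hze hSe) heG)
  set S' := insert z (S.erase v) with hS'
  have hS'c : S'.card = ℓ := by
    rw [hS', card_insert_of_notMem (fun h => hzS (mem_of_mem_erase h)), card_erase_of_mem hvS]
    omega
  have hS'e : S' ⊆ e := insert_subset hze ((erase_subset _ _).trans hSe)
  have hvS' : v ∉ S' := by
    intro h
    rcases mem_insert.1 h with rfl | h
    · exact hzS hvS
    · exact notMem_erase _ _ h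
  have hvlt : ∀ x ∈ S', σ v < σ x := by
    intro x hx
    rcases mem_insert.1 hx with rfl | hx
    · exact hzkey v hvS
    · have hxS := mem_of_mem_erase hx
      exact lt_of_le_of_ne (hvmin x hxS) fun h =>
        ne_of_mem_erase hx (hinj _ (hV _ hSG hvS) _ (hV _ hSG hxS) h).symm
  have hrank : ∀ x ∈ S', 2 ≤ rankIn e σ x := by
    intro x hx
    have hsubs : ({v, x} : Finset α) ⊆ e.filter fun y => σ y ≤ σ x := by
      intro a ha
      rcases mem_insert.1 ha with rfl | ha
      · exact mem_filter.2 ⟨hSe hvS, (hvlt x hx).le⟩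
      · rw [mem_singleton.1 ha]
        exact mem_filter.2 ⟨hS'e hx, le_rfl⟩
    have := card_le_card hsubs
    have hvx : v ≠ x := fun h => hvS' (by rwa [h])
    rwa [card_pair hvx] at this
  obtain ⟨e', he'E, hS'e', hve', he'G⟩ := hext S' v hS'c hvS'
    (hsub _ _ (insert_subset (hSe hvS) hS'e) heG)
  have hS'ne : S'.Nonempty := ⟨z, mem_insert_self _ _⟩
  obtain ⟨w, hwS', hwmin⟩ := exists_min_image S' σ hS'ne
  have hw2 : 2 ≤ rankIn e' σ w := by
    have hmem : rankIn e' σ w ∈ S'.image (rankIn e σ) := by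
      rw [← hφ e heE S' hS'e hS'c, hφ e' he'E S' hS'e' hS'c]
      exact mem_image_of_mem _ hwS'
    obtain ⟨x, hx, hxw⟩ := mem_image.1 hmem
    exact hxw ▸ hrank x hx
  obtain ⟨y, hy, hyw⟩ := exists_mem_ne (s := e'.filter fun y => σ y ≤ σ w) hw2 w
  obtain ⟨hye', hyle⟩ := mem_filter.1 hy
  have he'V : ∀ a ∈ e', a ∈ V := fun a ha => hV _ he'G (mem_insert_of_mem ha)
  have hylt : σ y < σ w :=
    lt_of_le_of_ne hyle fun h => hyw (hinj _ (he'V _ hye') _ (he'V _ (hS'e' hwS')) h)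
  have hyS' : y ∉ S' := fun h => absurd (hwmin y h) (by omega)
  have hyv : y ≠ v := fun h => hve' (h ▸ hye')
  have hyS : y ∉ S := fun h => hyS' (mem_insert_of_mem (mem_erase.2 ⟨hyv, h⟩))
  have hins : insert y S ⊆ insert v e' := by
    refine insert_subset (mem_insert_of_mem hye') fun a ha => ?_
    by_cases hav : a = v
    · exact hav ▸ mem_insert_self _ _
    · exact mem_insert_of_mem (hS'e' (mem_insert_of_mem (mem_erase.2 ⟨hav, ha⟩)))
  have hykey := key y hyS (hsub _ _ hins he'G)
  obtain ⟨s, hs⟩ : (S.erase v).Nonempty := by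
    rw [← card_pos, card_erase_of_mem hvS]; omega
  have h1 := hykey s (mem_of_mem_erase hs)
  have h2 := hwmin s (mem_insert_of_mem hs)
  omega

/-- A `k`-graph `G` on `Fin M` in which every `ℓ`-set `S` extends to an edge avoiding any
prescribed vertex outside `S`. -/
def Flexible {M : ℕ} (k ℓ : ℕ) (G : Finset (Finset (Fin M))) : Prop :=
  (∀ e ∈ G, e.card = k) ∧
    ∀ S : Finset (Fin M), ∀ u, S.card = ℓ → u ∉ S → ∃ e ∈ G, S ⊆ e ∧ u ∉ e

/-- The edge set of the categorical product of the `k`-graphs `G ∈ 𝒞`, where the vertex `v` has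
the coordinate `p v G` in the factor `G`: the `k`-sets projecting onto an edge of each factor. -/
def prodEdges {M : ℕ} (k : ℕ) (𝒞 : Finset (Finset (Finset (Fin M)))) (V : Finset ℕ)
    (p : ℕ → Finset (Finset (Fin M)) → Fin M) : Finset (Finset ℕ) :=
  (V.powersetCard k).filter fun e => ∀ G ∈ 𝒞, (e.image fun v => p v G) ∈ G

/-- The extension property of flexible graphs passes to their product. -/
lemma prod_extend {M k ℓ : ℕ} (hk : ℓ ≤ k) {𝒞 : Finset (Finset (Finset (Fin M)))}
    (h𝒞 : ∀ G ∈ 𝒞, Flexible k ℓ G) (hne : 𝒞.Nonempty) {V : Finset ℕ}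
    {p : ℕ → Finset (Finset (Fin M)) → Fin M} (hp : ∀ w, ∃ v ∈ V, p v = w)
    {S : Finset ℕ} {u : ℕ} (hSc : S.card = ℓ) (hu : u ∉ S) (huV : insert u S ⊆ V)
    (hinj : ∀ G ∈ 𝒞, Set.InjOn (fun v => p v G) (insert u S : Finset ℕ)) :
    ∃ e ∈ prodEdges k 𝒞 V p, S ⊆ e ∧ u ∉ e ∧ insert u e ⊆ V ∧
      ∀ G ∈ 𝒞, Set.InjOn (fun v => p v G) (insert u e : Finset ℕ) := by
  classical
  have h1 : ∀ G, ∃ w : Fin (k - ℓ) → Fin M, G ∈ 𝒞 →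
      ((S.image fun v => p v G) ∪ univ.image w) ∈ G ∧
        p u G ∉ (S.image fun v => p v G) ∪ univ.image w := by
    intro G
    by_cases hG : G ∈ 𝒞
    · have hcS : (S.image fun v => p v G).card = ℓ := by
        rw [card_image_of_injOn ((hinj G hG).mono (by simp)), hSc]
      have huS : p u G ∉ S.image fun v => p v G := by
        intro h
        obtain ⟨v, hv, hvu⟩ := mem_image.1 h
        have := hinj G hG (by simp [hv]) (by simp) hvu
        exact hu (this ▸ hv)
      obtain ⟨e, heG, hSe, hue⟩ := (h𝒞 G hG).2 _ _ hcS huS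
      have hc : (e \ S.image fun v => p v G).card = k - ℓ := by
        rw [card_sdiff_of_subset hSe, (h𝒞 G hG).1 e heG, hcS]
      have him : univ.image ((e \ S.image fun v => p v G).orderEmbOfFin hc) =
          e \ S.image fun v => p v G := by
        apply coe_injective
        simp
      refine ⟨(e \ S.image fun v => p v G).orderEmbOfFin hc, fun _ => ?_⟩
      rw [him, union_sdiff_of_subset hSe]
      exact ⟨heG, hue⟩
    · exact ⟨fun _ => p u G, fun h => absurd h hG⟩
  choose w hw using h1
  choose x hxV hx using fun j : Fin (k - ℓ) => hp fun G => w G j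
  have himg : ∀ G, ((S ∪ univ.image x).image fun v => p v G) =
      (S.image fun v => p v G) ∪ univ.image (w G) := by
    intro G
    rw [image_union, image_image]
    congr 2
    funext j
    simp [hx]
  have hcard_le : (S ∪ univ.image x).card ≤ k := by
    have h1 := card_union_le S (univ.image x)
    have h2 := card_image_le (s := univ) (f := x)
    rw [card_univ, Fintype.card_fin] at h2
    omega
  have himc : ∀ G ∈ 𝒞, ((S ∪ univ.image x).image fun v => p v G).card = k := by
    intro G hG
    rw [himg]
    exact (h𝒞 G hG).1 _ (hw G hG).1
  have hcard : (S ∪ univ.image x).card = k := by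
    obtain ⟨G, hG⟩ := hne
    refine le_antisymm hcard_le ?_
    exact (himc G hG).symm.le.trans card_image_le
  have heV : S ∪ univ.image x ⊆ V := by
    refine union_subset ((subset_insert _ _).trans huV) ?_
    intro a ha
    obtain ⟨j, -, rfl⟩ := mem_image.1 ha
    exact hxV j
  have hui : ∀ G ∈ 𝒞, p u G ∉ (S ∪ univ.image x).image fun v => p v G := by
    intro G hG
    rw [himg]
    exact (hw G hG).2
  have hue : u ∉ S ∪ univ.image x := by
    obtain ⟨G, hG⟩ := hne
    exact fun h => hui G hG (mem_image_of_mem (fun v => p v G) h)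
  refine ⟨S ∪ univ.image x, ?_, subset_union_left, hue, ?_, ?_⟩
  · refine mem_filter.2 ⟨mem_powersetCard.2 ⟨heV, hcard⟩, fun G hG => ?_⟩
    rw [himg]
    exact (hw G hG).1
  · exact insert_subset (huV (mem_insert_self _ _)) heV
  · intro G hG
    rw [coe_insert, Set.injOn_insert (by exact_mod_cast hue)]
    refine ⟨card_image_iff.1 ((himc G hG).trans hcard.symm), ?_⟩
    have := hui G hG
    rwa [← mem_coe, coe_image] at this

/-- A product of flexible `k`-graphs has no `ℓ`-vanishing order; its generic sets are those
that project injectively to every factor. -/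
lemma prod_not_vanishing {M k ℓ : ℕ} (hℓ : 2 ≤ ℓ) (hk : ℓ < k) (hM : ℓ < M)
    {𝒞 : Finset (Finset (Finset (Fin M)))}
    (h𝒞 : ∀ G ∈ 𝒞, Flexible k ℓ G) (hne : 𝒞.Nonempty) {V : Finset ℕ}
    {p : ℕ → Finset (Finset (Fin M)) → Fin M} (hp : ∀ w, ∃ v ∈ V, p v = w) (σ : ℕ → ℕ) :
    ¬ IsVanishingOrder ℓ V (prodEdges k 𝒞 V p) σ := by
  classical
  apply not_vanishing_of_generic hℓ
    (fun S => S ⊆ V ∧ ∀ G ∈ 𝒞, Set.InjOn (fun v => p v G) (S : Set ℕ))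
  · exact fun S T hTS hS => ⟨hTS.trans hS.1, fun G hG => (hS.2 G hG).mono (by exact_mod_cast hTS)⟩
  · exact fun S hS => hS.1
  · -- the diagonal vertices
    choose x hxV hx using fun j : Fin ℓ => hp fun _ => Fin.castLE hM.le j
    have hinj : ∀ G, Function.Injective fun j => p (x j) G := by
      intro G i j hij
      simpa [hx] using hij
    have hxi : Function.Injective x := fun i j hij => hinj ∅ (by simp only [hij])
    refine ⟨univ.image x, by simp [card_image_of_injective _ hxi], ?_, ?_⟩
    · intro a ha
      obtain ⟨j, -, rfl⟩ := mem_image.1 ha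
      exact hxV j
    · intro G hG a ha b hb hab
      obtain ⟨i, -, rfl⟩ := mem_image.1 (mem_coe.1 ha)
      obtain ⟨j, -, rfl⟩ := mem_image.1 (mem_coe.1 hb)
      exact congrArg x (hinj G hab)
  · rintro S hSc ⟨hSV, hSi⟩
    have hu : ∀ G, ∃ a, a ∉ S.image fun v => p v G := by
      intro G
      by_contra! h
      have h1 : (S.image fun v => p v G).card ≤ ℓ := hSc ▸ card_image_le
      rw [eq_univ_iff_forall.2 h, card_univ, Fintype.card_fin] at h1
      omega
    choose a ha using hu
    obtain ⟨u, huV, rfl⟩ := hp a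
    have huS : u ∉ S := fun h => ha ∅ (mem_image_of_mem (fun v => p v ∅) h)
    obtain ⟨e, he, hSe, -, heV, hei⟩ := prod_extend hk.le h𝒞 hne hp hSc huS
      (insert_subset huV hSV) (fun G hG => by
        rw [coe_insert, Set.injOn_insert (by exact_mod_cast huS)]
        refine ⟨hSi G hG, ?_⟩
        have := ha G
        rwa [← mem_coe, coe_image] at this)
    refine ⟨e, he, hSe, ?_, (subset_insert _ _).trans heV, fun G hG => (hei G hG).mono (by simp)⟩
    rw [(mem_powersetCard.1 (mem_filter.1 he).1).2]
    exact hk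
  · rintro S u hSc hu ⟨hV', hi⟩
    obtain ⟨e, he, hSe, hue, heV, hei⟩ := prod_extend hk.le h𝒞 hne hp hSc hu hV' hi
    exact ⟨e, he, hSe, hue, heV, hei⟩

/-! ### Boxes in dense sets of tuples, and copies of the product -/

/-- Dense sets of `M`-tuples contain large boxes (Kővári–Sós–Turán, Erdős). By pigeonhole,
boundedly many first coordinates, all of large degree, already contain `t` that occur together with
a positive proportion of the `(M-1)`-tuples. -/
lemma exists_box (t M : ℕ) : ∀ c : ℝ, 0 < c → ∃ N₀ : ℕ, ∀ N ≥ N₀,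
    ∀ A : Finset (Fin M → Fin N), c * (N : ℝ) ^ M ≤ A.card →
      ∃ T : Fin M → Finset (Fin N), (∀ i, t ≤ (T i).card) ∧ ∀ y, (∀ i, y i ∈ T i) → y ∈ A := by
  classical
  induction M with
  | zero =>
    intro c hc
    refine ⟨0, fun N _ A hA => ⟨fun i => i.elim0, fun i => i.elim0, fun y _ => ?_⟩⟩
    have : 0 < A.card := by
      have : (0 : ℝ) < A.card := lt_of_lt_of_le (by positivity) hA
      exact_mod_cast this
    obtain ⟨a, ha⟩ := card_pos.1 this
    rwa [Subsingleton.elim y a]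
  | succ M ih =>
    intro c hc
    -- `s` first coordinates suffice for the pigeonhole step
    set s : ℕ := ⌈4 * (t : ℝ) / c⌉₊ + 1 with hs
    have hs0 : (0 : ℝ) < s := by rw [hs]; positivity
    have hst : 4 * (t : ℝ) ≤ c * s := by
      have h1 : 4 * (t : ℝ) / c ≤ s := by
        rw [hs]; push_cast
        linarith [Nat.le_ceil (4 * (t : ℝ) / c)]
      rw [div_le_iff₀ hc] at h1
      linarith
    obtain ⟨N₁, hN₁⟩ := ih (c / 4 / 2 ^ s) (by positivity)
    refine ⟨max N₁ (⌈2 * (s : ℝ) / c⌉₊ + 1), fun N hN A hA => ?_⟩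
    have hNN₁ : N₁ ≤ N := (le_max_left _ _).trans hN
    have hNs : 2 * (s : ℝ) ≤ c * N := by
      have h1 : ⌈2 * (s : ℝ) / c⌉₊ + 1 ≤ N := (le_max_right _ _).trans hN
      have h2 : 2 * (s : ℝ) / c ≤ N := (Nat.le_ceil _).trans (by exact_mod_cast (Nat.le_succ _).trans h1)
      rw [div_le_iff₀ hc] at h2
      linarith
    have hN0 : (0 : ℝ) < N := by
      have h1 : ⌈2 * (s : ℝ) / c⌉₊ + 1 ≤ N := (le_max_right _ _).trans hN
      exact_mod_cast by omega
    set P : ℝ := (N : ℝ) ^ M with hP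
    have hP0 : 0 < P := by positivity
    let f : Fin N → Finset (Fin M → Fin N) := fun v => univ.filter fun y => Fin.cons v y ∈ A
    have hfle : ∀ v, ((f v).card : ℝ) ≤ P := by
      intro v
      have : (f v).card ≤ N ^ M := (card_le_univ _).trans (by simp)
      rw [hP]
      exact_mod_cast this
    have hAsum : (A.card : ℝ) = ∑ v, ((f v).card : ℝ) := by
      have h1 : A.card = ∑ v, (A.filter fun y => y 0 = v).card :=
        card_eq_sum_card_fiberwise fun _ _ => mem_coe.2 (mem_univ _)
      rw [h1]
      push_cast
      refine sum_congr rfl fun v _ => ?_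
      congr 1
      symm
      refine card_bij (fun y _ => Fin.cons v y) ?_ ?_ ?_
      · intro y hy
        exact mem_filter.2 ⟨(mem_filter.1 hy).2, by simp⟩
      · intro y _ z _ h
        exact Fin.cons_right_injective (α := fun _ => Fin N) v h
      · intro y hy
        obtain ⟨h1, h2⟩ := mem_filter.1 hy
        have h3 : (Fin.cons v (Fin.tail y) : Fin (M + 1) → Fin N) = y := by
          rw [← h2]; exact Fin.cons_self_tail y
        exact ⟨Fin.tail y, mem_filter.2 ⟨mem_univ _, by rw [h3]; exact h1⟩, h3⟩
    set B : Finset (Fin N) := univ.filter fun v => c / 2 * P ≤ (f v).card with hB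
    have hBs : s ≤ B.card := by
      by_contra! hlt
      have hlt' : (B.card : ℝ) < s := by exact_mod_cast hlt
      have h1 : ∑ v, ((f v).card : ℝ) ≤ B.card * P + N * (c / 2 * P) := by
        rw [← sum_filter_add_sum_filter_not univ fun v => c / 2 * P ≤ (f v).card]
        refine add_le_add ?_ ?_
        · rw [← nsmul_eq_mul]
          exact sum_le_card_nsmul _ _ _ fun v _ => hfle v
        · refine (sum_le_card_nsmul _ _ (c / 2 * P) fun v hv =>
            (not_le.1 (mem_filter.1 hv).2).le).trans ?_
          rw [nsmul_eq_mul]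
          refine mul_le_mul_of_nonneg_right ?_ (by positivity)
          exact_mod_cast (card_le_univ _).trans (by simp)
      have h2 : c * (N : ℝ) ^ (M + 1) = c * N * P := by rw [hP]; ring
      rw [h2, hAsum] at hA
      have h3 : (B.card : ℝ) * P < s * P := by gcongr
      nlinarith
    obtain ⟨Q, hQB, hQc⟩ := exists_subset_card_eq hBs
    let W : Finset (Fin M → Fin N) := univ.filter fun y => t ≤ (Q.filter fun v => y ∈ f v).card
    have hdc : ∑ v ∈ Q, ((f v).card : ℝ) = ∑ y, ((Q.filter fun v => y ∈ f v).card : ℝ) := by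
      have := sum_card_bipartiteAbove_eq_sum_card_bipartiteBelow (s := Q)
        (t := (univ : Finset (Fin M → Fin N))) fun v y => y ∈ f v
      simp only [bipartiteAbove, bipartiteBelow, filter_mem_eq_inter, univ_inter] at this
      exact_mod_cast this
    have hWc : c / 4 * P ≤ W.card := by
      have h1 : (s : ℝ) * (c / 2 * P) ≤ ∑ v ∈ Q, ((f v).card : ℝ) := by
        rw [← hQc, ← nsmul_eq_mul]
        exact card_nsmul_le_sum _ _ _ fun v hv => (mem_filter.1 (hQB hv)).2
      have h2 : ∑ y, ((Q.filter fun v => y ∈ f v).card : ℝ) ≤ W.card * s + P * t := by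
        rw [← sum_filter_add_sum_filter_not univ fun y => t ≤ (Q.filter fun v => y ∈ f v).card]
        refine add_le_add ?_ ?_
        · rw [← nsmul_eq_mul]
          refine sum_le_card_nsmul _ _ _ fun y _ => ?_
          rw [← hQc]
          exact_mod_cast card_filter_le _ _
        · refine (sum_le_card_nsmul _ _ (t : ℝ) fun v hv => ?_).trans ?_
          · exact_mod_cast (not_le.1 (mem_filter.1 hv).2).le
          rw [nsmul_eq_mul]
          refine mul_le_mul_of_nonneg_right ?_ (by positivity)
          rw [hP]
          exact_mod_cast (card_le_univ _).trans (by simp)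
      rw [← hdc] at h2
      have h3 : P * (4 * t) ≤ P * (c * s) := by gcongr
      have h4 : s * (c / 4 * P) ≤ s * (W.card : ℝ) := by nlinarith
      exact le_of_mul_le_mul_left h4 hs0
    obtain ⟨T, hT, hTW⟩ : ∃ T ∈ Q.powersetCard t,
        c / 4 / 2 ^ s * P ≤ ((W.filter fun y => T ⊆ Q.filter fun v => y ∈ f v).card : ℝ) := by
      by_contra! hlt
      have hsub : W ⊆ (Q.powersetCard t).biUnion fun T =>
          W.filter fun y => T ⊆ Q.filter fun v => y ∈ f v := by
        intro y hy
        obtain ⟨T, hT, hTc⟩ := exists_subset_card_eq (mem_filter.1 hy).2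
        exact mem_biUnion.2 ⟨T, mem_powersetCard.2 ⟨hT.trans (filter_subset _ _), hTc⟩,
          mem_filter.2 ⟨hy, hT⟩⟩
      have h1 : (W.card : ℝ) ≤ ∑ T ∈ Q.powersetCard t,
          ((W.filter fun y => T ⊆ Q.filter fun v => y ∈ f v).card : ℝ) := by
        exact_mod_cast (card_le_card hsub).trans card_biUnion_le
      have hW0 : (0 : ℝ) < W.card := lt_of_lt_of_le (by positivity) hWc
      have hne : (Q.powersetCard t).Nonempty := by
        rw [nonempty_iff_ne_empty]
        intro h
        rw [h, sum_empty] at h1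
        linarith
      have h2 := sum_lt_sum_of_nonempty hne fun T hT => hlt T hT
      rw [sum_const, nsmul_eq_mul] at h2
      have h3 : ((Q.powersetCard t).card : ℝ) ≤ 2 ^ s := by
        have : (Q.powersetCard t).card ≤ 2 ^ s := by
          rw [card_powersetCard, hQc]
          exact Nat.choose_le_two_pow _ _
        exact_mod_cast this
      have h4 : ((Q.powersetCard t).card : ℝ) * (c / 4 / 2 ^ s * P) ≤
          2 ^ s * (c / 4 / 2 ^ s * P) := by gcongr
      have h5 : (2 : ℝ) ^ s * (c / 4 / 2 ^ s * P) = c / 4 * P := by field_simp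
      linarith
    obtain ⟨T', hT'c, hT'⟩ := hN₁ N hNN₁ _ hTW
    refine ⟨Fin.cons T T', fun i => ?_, fun y hy => ?_⟩
    · refine Fin.cases ?_ (fun i => ?_) i
      · simpa using (mem_powersetCard.1 hT).2.ge
      · simpa using hT'c i
    · have h1 := hT' (Fin.tail y) fun i => by simpa [Fin.tail] using hy i.succ
      have h2 : y 0 ∈ T := by simpa using hy 0
      have h3 := (mem_filter.1 ((mem_filter.1 h1).2 h2)).2
      have h4 := (mem_filter.1 h3).2
      rwa [Fin.cons_self_tail] at h4

/-- The `k`-graph on `ι` obtained by pulling back `E` along a tuple `x` of vertices. -/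
def pull {ι : Type*} [Fintype ι] [DecidableEq ι] [DecidableEq β] (k : ℕ)
    (E : Finset (Finset β)) (x : ι → β) : Finset (Finset ι) :=
  (univ.powersetCard k).filter fun e => e.image x ∈ E

/-- A positive proportion of tuples inducing members of `𝒞` forces a copy of the product of `𝒞`:
one member `G` appears on a large box of tuples, which is a blow-up of `G`, and the product maps
homomorphically to `G`. -/
lemma containsCopy_prod {M k : ℕ} (𝒞 : Finset (Finset (Finset (Fin M)))) (V : Finset ℕ)
    (p : ℕ → Finset (Finset (Fin M)) → Fin M) :
    ∃ N₀ : ℕ, ∀ N ≥ N₀, ∀ (E : Finset (Finset (Fin N))) (A : Finset (Fin M → Fin N)),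
      (N : ℝ) ^ M / 2 ≤ A.card → (∀ x ∈ A, Function.Injective x ∧ pull k E x ∈ 𝒞) →
      ContainsCopy V (prodEdges k 𝒞 V p) (univ : Finset (Fin N)) E := by
  classical
  obtain ⟨N₀, hN₀⟩ := exists_box (V.card + 1) M (1 / 2 / (𝒞.card + 1)) (by positivity)
  refine ⟨max N₀ 1, fun N hN E A hA hx => ?_⟩
  have hN0 : (0 : ℝ) < N := by
    have : 1 ≤ N := (le_max_right _ _).trans hN
    exact_mod_cast this
  obtain ⟨G, hG, hGA⟩ : ∃ G ∈ 𝒞,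
      1 / 2 / (𝒞.card + 1) * (N : ℝ) ^ M ≤ ((A.filter fun x => pull k E x = G).card : ℝ) := by
    by_contra! hlt
    have h1 : (A.card : ℝ) = ∑ G ∈ 𝒞, ((A.filter fun x => pull k E x = G).card : ℝ) := by
      exact_mod_cast card_eq_sum_card_fiberwise fun x hxA => mem_coe.2 (hx x hxA).2
    have h2 := sum_le_card_nsmul 𝒞 _ _ fun G hG => (hlt G hG).le
    rw [← h1, nsmul_eq_mul] at h2
    have h3 : (𝒞.card : ℝ) * (1 / 2 / (𝒞.card + 1) * (N : ℝ) ^ M) =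
        (N : ℝ) ^ M / 2 * (𝒞.card / (𝒞.card + 1)) := by ring
    have h4 : (𝒞.card : ℝ) / (𝒞.card + 1) < 1 := by
      rw [div_lt_one (by positivity)]; linarith
    have h5 : (0 : ℝ) < (N : ℝ) ^ M / 2 := by positivity
    nlinarith
  obtain ⟨T, hTc, hT⟩ := hN₀ N ((le_max_left _ _).trans hN) _ hGA
  have hTne : ∀ i, (T i).Nonempty := fun i => card_pos.1 (by have := hTc i; omega)
  choose b hb using hTne
  have hdisj : ∀ i j, i ≠ j → ∀ a, a ∈ T i → a ∉ T j := by
    intro i j hij a hai haj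
    have hy : ∀ l, (Function.update (Function.update b i a) j a) l ∈ T l := by
      intro l
      by_cases hlj : l = j
      · subst hlj; simpa using haj
      · rw [Function.update_of_ne hlj]
        by_cases hli : l = i
        · subst hli; simpa using hai
        · rw [Function.update_of_ne hli]; exact hb l
    have h1 := (hx _ (mem_filter.1 (hT _ hy)).1).1
    refine hij (h1 ?_)
    rw [Function.update_self, Function.update_of_ne hij, Function.update_self]
  have hemb : ∀ i, ∃ τ : ℕ → Fin N, Set.InjOn τ V ∧ ∀ v, τ v ∈ T i := by
    intro i
    have h1 : V.card ≤ (T i).card := by have := hTc i; omega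
    obtain ⟨U, hUT, hU⟩ := exists_subset_card_eq h1
    let g := (equivOfCardEq hU.symm : V ≃ U)
    refine ⟨fun v => if h : v ∈ V then (g ⟨v, h⟩ : Fin N) else b i, ?_, ?_⟩
    · intro v hv w hw hvw
      have hv' := mem_coe.1 hv
      have hw' := mem_coe.1 hw
      simp only [hv', hw', dif_pos] at hvw
      simpa using g.injective (Subtype.ext hvw)
    · intro v
      by_cases h : v ∈ V
      · simp only [h, dif_pos]
        exact hUT (g ⟨v, h⟩).2
      · simp only [h, dif_neg, not_false_iff]
        exact hb i
  choose τ hτi hτT using hemb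
  refine ⟨fun v => τ (p v G) v, ?_, fun _ _ => mem_univ _, ?_⟩
  · intro v hv w hw hvw
    by_cases h : p v G = p w G
    · simp only [h] at hvw
      exact hτi _ hv hw hvw
    · refine absurd (hτT (p w G) w) (hdisj _ _ h _ ?_)
      have := hτT (p v G) v
      simp only at hvw
      rwa [hvw] at this
  · intro e he
    obtain ⟨he1, he2⟩ := mem_filter.1 he
    have heG := he2 G hG
    -- the tuple sending the `G`-coordinate of each vertex of `e` to the image of that vertex
    let y : Fin M → Fin N := fun j =>
      if h : ∃ v ∈ e, p v G = j then τ j h.choose else b j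
    have hy : ∀ j, y j ∈ T j := by
      intro j
      by_cases h : ∃ v ∈ e, p v G = j
      · simp only [y, h, dif_pos]; exact hτT _ _
      · simp only [y, h, dif_neg, not_false_iff]; exact hb j
    have hyA := mem_filter.1 (hT y hy)
    have heG' : (e.image fun v => p v G) ∈ pull k E y := by rw [hyA.2]; exact heG
    have hinj : Set.InjOn (fun v => p v G) e := by
      rw [← card_image_iff, (mem_powersetCard.1 he1).2]
      exact (mem_powersetCard.1 (mem_filter.1 heG').1).2
    have hye : (e.image fun v => τ (p v G) v) = (e.image fun v => p v G).image y := by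
      rw [image_image]
      refine image_congr fun v hv => ?_
      have h : ∃ w ∈ e, p w G = p v G := ⟨v, hv, rfl⟩
      simp only [Function.comp, y, h, dif_pos]
      rw [hinj h.choose_spec.1 hv h.choose_spec.2]
    rw [hye]
    exact (mem_filter.1 heG').2

/-! ### Concentration of the number of induced edges -/

lemma exists_perm_image {I : Type*} [Fintype I] [DecidableEq I] {e e' : Finset I}
    (h : e.card = e'.card) : ∃ ρ : Equiv.Perm I, e.image ρ = e' := by
  let g : {x // x ∈ e} ≃ {x // x ∈ e'} := equivOfCardEq h
  refine ⟨g.extendSubtype, eq_of_subset_of_card_le ?_ ?_⟩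
  · intro a ha
    obtain ⟨x, hx, rfl⟩ := mem_image.1 ha
    exact g.extendSubtype_mem x hx
  · rw [card_image_of_injective _ g.extendSubtype.injective, h]

/-- A uniformly random permutation takes an `r`-set to a uniformly random `r`-set. -/
lemma sum_perm_image {I : Type*} [Fintype I] [DecidableEq I] {r : ℕ} {B : Finset I}
    (hB : B.card = r) (g : Finset I → ℝ) :
    ((Fintype.card I).choose r : ℝ) * ∑ π : Equiv.Perm I, g (B.image π) =
      (Fintype.card I).factorial * ∑ e ∈ univ.powersetCard r, g e := by
  have hmaps : ∀ π ∈ (univ : Finset (Equiv.Perm I)), B.image π ∈ univ.powersetCard r := by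
    intro π _
    exact mem_powersetCard.2 ⟨subset_univ _, by rw [card_image_of_injective _ π.injective, hB]⟩
  let c : Finset I → ℕ := fun e => (univ.filter fun π : Equiv.Perm I => B.image π = e).card
  have hc : ∀ e ∈ (univ : Finset I).powersetCard r, c e = c B := by
    intro e he
    obtain ⟨ρ, hρ⟩ := exists_perm_image (hB.trans (mem_powersetCard.1 he).2.symm)
    symm
    refine card_bij (fun π _ => ρ * π) ?_ (fun a _ b _ h => mul_left_cancel h) ?_
    · intro π hπ
      refine mem_filter.2 ⟨mem_univ _, ?_⟩
      rw [Equiv.Perm.coe_mul, ← image_image, (mem_filter.1 hπ).2, hρ]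
    · intro π hπ
      refine ⟨ρ⁻¹ * π, mem_filter.2 ⟨mem_univ _, ?_⟩, by simp⟩
      rw [Equiv.Perm.coe_mul, ← image_image, (mem_filter.1 hπ).2, ← hρ, image_image]
      have : ⇑ρ⁻¹ ∘ ⇑ρ = id := by funext a; simp
      rw [this, image_id]
  have h1 : (Fintype.card I).factorial = (Fintype.card I).choose r * c B := by
    have := card_eq_sum_card_fiberwise hmaps
    rw [card_univ, Fintype.card_perm, sum_congr rfl hc, sum_const, card_powersetCard,
      card_univ, smul_eq_mul] at this
    exact this
  have h2 : ∑ π : Equiv.Perm I, g (B.image π) = c B * ∑ e ∈ univ.powersetCard r, g e := by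
    rw [← sum_fiberwise_of_maps_to hmaps, mul_sum]
    refine sum_congr rfl fun e he => ?_
    rw [sum_congr rfl fun π hπ => by rw [(mem_filter.1 hπ).2], sum_const, nsmul_eq_mul]
    rw [← hc e he]
  rw [h2, h1]
  push_cast
  ring

/-- Independence of disjoint blocks: the sum over all `y` of a product over `b` disjoint blocks
of length `r` factorises. -/
lemma sum_prod_blocks {I W : Type*} [Fintype I] [DecidableEq I] [Fintype W] {b r q : ℕ}
    (φ : (Fin b × Fin r) ⊕ Fin q ≃ I) (h : (Fin r → W) → ℝ) :
    ∑ y : I → W, ∏ j, h (fun i => y (φ (Sum.inl (j, i)))) =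
      (Fintype.card W : ℝ) ^ q * (∑ u, h u) ^ b := by
  have h1 : ∑ y : I → W, ∏ j, h (fun i => y (φ (Sum.inl (j, i)))) =
      ∑ y : (Fin b × Fin r) ⊕ Fin q → W, ∏ j, h (fun i => y (Sum.inl (j, i))) := by
    rw [← Equiv.sum_comp (Equiv.arrowCongr φ (Equiv.refl W))]
    simp [Equiv.arrowCongr]
  rw [h1, ← Equiv.sum_comp (Equiv.sumArrowEquivProdArrow _ _ W).symm, Fintype.sum_prod_type]
  simp only [Equiv.sumArrowEquivProdArrow_symm_apply_inl, sum_const, card_univ,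
    Fintype.card_fun, Fintype.card_fin, nsmul_eq_mul]
  rw [← mul_sum, Fintype.sum_pow, ← Equiv.sum_comp (Equiv.curry (Fin b) (Fin r) W).symm]
  simp [Function.uncurry]

/-- Hoeffding's inequality for the number of `r`-sets of `I` that a random map `y : I → W` sends
to `𝓛`, up to constants. The count is an average over permutations of sums over disjoint blocks;
convexity of `exp` reduces its moment generating function to that of a sum of independent
indicators. -/
lemma card_pull_le {I W : Type*} [Fintype I] [DecidableEq I] [Fintype W] [DecidableEq W] {r : ℕ}
    (𝓛 : Finset (Finset W)) {μ η : ℝ} (hη : 0 < η) (hμ1 : μ ≤ 1)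
    (hμ : μ * (Fintype.card W : ℝ) ^ r ≤
      ((univ.filter fun u : Fin r → W => univ.image u ∈ 𝓛).card : ℝ)) :
    ((univ.filter fun y : I → W =>
        ((pull r 𝓛 y).card : ℝ) ≤ (μ - η) * (Fintype.card I).choose r).card : ℝ) ≤
      Real.exp (-(η ^ 2 / 4) * (Fintype.card I / r : ℕ)) *
        (Fintype.card W : ℝ) ^ Fintype.card I := by
  set m := Fintype.card I with hm
  set N : ℝ := (Fintype.card W : ℝ) with hN
  set b := m / r with hb
  have hN0 : 0 ≤ N := by positivity
  rcases Nat.eq_zero_or_pos b with hb0 | hb0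
  · rw [hb0]
    simp only [Nat.cast_zero, mul_zero, Real.exp_zero, one_mul]
    have := card_filter_le (univ : Finset (I → W))
      fun y => ((pull r 𝓛 y).card : ℝ) ≤ (μ - η) * m.choose r
    rw [card_univ, Fintype.card_fun] at this
    rw [hN]
    exact_mod_cast this
  have hrm : r ≤ m := by
    by_contra! h
    rw [hb, Nat.div_eq_of_lt h] at hb0
    exact lt_irrefl _ hb0
  have hbr : b * r ≤ m := Nat.div_mul_le_self m r
  set q := m - b * r with hq
  have hcardeq : Fintype.card ((Fin b × Fin r) ⊕ Fin q) = Fintype.card I := by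
    simp only [Fintype.card_sum, Fintype.card_prod, Fintype.card_fin]
    omega
  let φ := Fintype.equivOfCardEq hcardeq
  let blk : Fin b → Fin r → I := fun j i => φ (Sum.inl (j, i))
  have hblk : ∀ j, Function.Injective (blk j) := by
    intro j i i' h
    simpa [blk] using h
  let Z : (Fin r → W) → ℝ := fun u => if univ.image u ∈ 𝓛 then 1 else 0
  set C : ℝ := (m.choose r : ℝ) with hC
  have hC0 : 0 < C := by
    rw [hC]; exact_mod_cast Nat.choose_pos hrm
  set t : ℝ := η / 2 with ht
  have ht0 : 0 < t := by rw [ht]; positivity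
  set F : ℝ := (m.factorial : ℝ) with hF
  have hF0 : 0 < F := by rw [hF]; exact_mod_cast Nat.factorial_pos m
  have hperm : (Fintype.card (Equiv.Perm I) : ℝ) = F := by rw [Fintype.card_perm]
  -- the mean over all permutations of the block sums
  have hmean : ∀ y : I → W, ∑ π : Equiv.Perm I, ∑ j, Z (fun i => y (π (blk j i))) =
      F * (b * ((pull r 𝓛 y).card : ℝ) / C) := by
    intro y
    have h1 : ∀ j, ∑ π : Equiv.Perm I, Z (fun i => y (π (blk j i))) =
        F * (pull r 𝓛 y).card / C := by
      intro j
      have hB : (univ.image (blk j)).card = r := by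
        rw [card_image_of_injective _ (hblk j), card_univ, Fintype.card_fin]
      have h2 := sum_perm_image hB fun e => if e.image y ∈ 𝓛 then (1 : ℝ) else 0
      have h3 : ∑ e ∈ (univ : Finset I).powersetCard r, (if e.image y ∈ 𝓛 then (1 : ℝ) else 0) =
          (pull r 𝓛 y).card := by
        rw [pull, sum_boole]
      rw [h3, ← hm] at h2
      rw [eq_div_iff hC0.ne', mul_comm, ← h2]
      congr 1
      refine sum_congr rfl fun π _ => ?_
      simp only [Z, image_image]
      rfl
    rw [sum_comm, sum_congr rfl fun j _ => h1 j, sum_const, card_univ, Fintype.card_fin,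
      nsmul_eq_mul]
    ring
  have hjensen : ∀ y : I → W, F * Real.exp (-t * (b * ((pull r 𝓛 y).card : ℝ) / C)) ≤
      ∑ π : Equiv.Perm I, Real.exp (-t * ∑ j, Z (fun i => y (π (blk j i)))) := by
    intro y
    set c := -t * (b * ((pull r 𝓛 y).card : ℝ) / C) with hc
    -- the tangent line of `exp` at `c`
    have h1 : ∀ a : ℝ, Real.exp c * (1 + (a - c)) ≤ Real.exp a := by
      intro a
      have h2 := Real.add_one_le_exp (a - c)
      calc Real.exp c * (1 + (a - c)) ≤ Real.exp c * Real.exp (a - c) := by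
            gcongr; linarith
        _ = Real.exp a := by rw [← Real.exp_add]; congr 1; ring
    refine le_trans (le_of_eq ?_) (sum_le_sum fun π _ => h1 _)
    rw [← mul_sum, sum_add_distrib, sum_sub_distrib, ← mul_sum, hmean, sum_const, sum_const,
      card_univ, nsmul_eq_mul, nsmul_eq_mul, hperm, hc]
    ring
  have hmgf : ∑ y : I → W, Real.exp (-t * (b * ((pull r 𝓛 y).card : ℝ) / C)) ≤
      N ^ q * (∑ u, Real.exp (-t * Z u)) ^ b := by
    refine le_of_mul_le_mul_left ?_ hF0
    rw [mul_sum]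
    refine (sum_le_sum fun y _ => hjensen y).trans (le_of_eq ?_)
    rw [sum_comm]
    have h1 : ∀ π : Equiv.Perm I, ∑ y : I → W,
        Real.exp (-t * ∑ j, Z (fun i => y (π (blk j i)))) =
        N ^ q * (∑ u, Real.exp (-t * Z u)) ^ b := by
      intro π
      rw [hN, ← sum_prod_blocks (φ.trans π)]
      refine sum_congr rfl fun y _ => ?_
      rw [mul_sum, Real.exp_sum]
      rfl
    rw [sum_congr rfl fun π _ => h1 π, sum_const, card_univ, nsmul_eq_mul, hperm]
  have hone : ∑ u, Real.exp (-t * Z u) ≤ N ^ r * Real.exp (-t * μ + t ^ 2) := by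
    set K : ℝ := ((univ.filter fun u : Fin r → W => univ.image u ∈ 𝓛).card : ℝ) with hK
    have h1 : ∑ u, Real.exp (-t * Z u) = N ^ r - K * (1 - Real.exp (-t)) := by
      have h2 : ∀ u, Real.exp (-t * Z u) = 1 - Z u * (1 - Real.exp (-t)) := by
        intro u
        by_cases hu : univ.image u ∈ 𝓛 <;> simp [Z, hu]
      rw [sum_congr rfl fun u _ => h2 u, sum_sub_distrib, ← sum_mul, sum_boole]
      simp only [sum_const, card_univ, Fintype.card_fun, Fintype.card_fin, nsmul_eq_mul, mul_one,
        Nat.cast_pow, hN, hK]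
    have hKN : K ≤ N ^ r := by
      have := card_filter_le (univ : Finset (Fin r → W)) fun u => univ.image u ∈ 𝓛
      rw [card_univ, Fintype.card_fun, Fintype.card_fin] at this
      rw [hK, hN]
      exact_mod_cast this
    have h3 : t - t ^ 2 ≤ 1 - Real.exp (-t) := by
      have h4 := Real.add_one_le_exp t
      have h5 : Real.exp (-t) * Real.exp t = 1 := by rw [← Real.exp_add]; simp
      have h6 := Real.exp_pos (-t)
      nlinarith [mul_pos ht0 ht0, mul_pos (mul_pos ht0 ht0) ht0]
    have h7 : 0 ≤ 1 - Real.exp (-t) := by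
      have := Real.exp_le_one_iff.2 (show -t ≤ 0 by linarith)
      linarith
    rw [h1]
    have h8 : N ^ r * (1 + (-t * μ + t ^ 2)) ≤ N ^ r * Real.exp (-t * μ + t ^ 2) := by
      gcongr
      linarith [Real.add_one_le_exp (-t * μ + t ^ 2)]
    have h9 : N ^ r * (t * μ - t ^ 2) ≤ K * (1 - Real.exp (-t)) := by
      have hNr : 0 ≤ N ^ r := by positivity
      by_cases h10 : 0 ≤ μ
      · have h11 : K * (1 - Real.exp (-t)) ≥ μ * N ^ r * (1 - Real.exp (-t)) := by gcongr
        have h12 : μ * N ^ r * (1 - Real.exp (-t)) ≥ μ * N ^ r * (t - t ^ 2) := by gcongr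
        have h13 : 0 ≤ N ^ r * (t ^ 2 * (1 - μ)) :=
          mul_nonneg hNr (mul_nonneg (by positivity) (by linarith))
        nlinarith
      · have h11 : 0 ≤ K * (1 - Real.exp (-t)) := mul_nonneg (by positivity) h7
        have h12 : N ^ r * (t * μ - t ^ 2) ≤ 0 := by
          refine mul_nonpos_of_nonneg_of_nonpos hNr ?_
          nlinarith
        linarith
    linarith
  -- Markov's inequality
  set D : ℝ := ((univ.filter fun y : I → W =>
        ((pull r 𝓛 y).card : ℝ) ≤ (μ - η) * C).card : ℝ) with hD
  have hmarkov : D * Real.exp (-t * (b * (μ - η))) ≤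
      ∑ y : I → W, Real.exp (-t * (b * ((pull r 𝓛 y).card : ℝ) / C)) := by
    rw [hD, ← nsmul_eq_mul]
    refine (card_nsmul_le_sum (univ.filter fun y : I → W =>
        ((pull r 𝓛 y).card : ℝ) ≤ (μ - η) * C) _ _ fun y hy => ?_).trans
      (sum_le_sum_of_subset_of_nonneg (filter_subset _ _) fun _ _ _ => (Real.exp_pos _).le)
    have h1 := (mem_filter.1 hy).2
    rw [Real.exp_le_exp, neg_mul, neg_mul, neg_le_neg_iff]
    refine mul_le_mul_of_nonneg_left ?_ ht0.le
    rw [div_le_iff₀ hC0, mul_assoc]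
    exact mul_le_mul_of_nonneg_left h1 (by positivity)
  have hfin : D * Real.exp (-t * (b * (μ - η))) ≤
      N ^ q * (N ^ r * Real.exp (-t * μ + t ^ 2)) ^ b := by
    refine (hmarkov.trans hmgf).trans ?_
    have : 0 ≤ ∑ u, Real.exp (-t * Z u) := sum_nonneg fun _ _ => (Real.exp_pos _).le
    gcongr
  have hsplit : N ^ q * (N ^ r * Real.exp (-t * μ + t ^ 2)) ^ b =
      (Real.exp (-(η ^ 2 / 4) * b) * N ^ m) * Real.exp (-t * (b * (μ - η))) := by
    have h1 : N ^ m = N ^ q * (N ^ r) ^ b := by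
      rw [← pow_mul, ← pow_add]
      congr 1
      rw [mul_comm r b]
      omega
    have h2 : Real.exp (-t * μ + t ^ 2) ^ b =
        Real.exp (-(η ^ 2 / 4) * b) * Real.exp (-t * (b * (μ - η))) := by
      rw [← Real.exp_nat_mul, ← Real.exp_add]
      congr 1
      rw [ht]
      ring
    rw [mul_pow, h1, h2]
    ring
  rw [hsplit] at hfin
  exact le_of_mul_le_mul_right hfin (Real.exp_pos _)

/-! ### Random samples of a hypergraph -/

/-- Each `r`-set is the range of at least `r!` maps from `Fin r`. -/
lemma factorial_mul_card_le {W : Type*} [Fintype W] [DecidableEq W] {r : ℕ}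
    {𝓛 : Finset (Finset W)} (h𝓛 : ∀ e ∈ 𝓛, e.card = r) :
    r.factorial * 𝓛.card ≤ (univ.filter fun u : Fin r → W => univ.image u ∈ 𝓛).card := by
  have hmaps : ∀ u ∈ univ.filter fun u : Fin r → W => univ.image u ∈ 𝓛, univ.image u ∈ 𝓛 :=
    fun u hu => (mem_filter.1 hu).2
  rw [card_eq_sum_card_fiberwise hmaps, mul_comm, ← smul_eq_mul]
  refine card_nsmul_le_sum _ _ _ fun e he => ?_
  let o : Fin r ≃ e := (equivFinOfCardEq (h𝓛 e he)).symm
  have h1 : Fintype.card (Equiv.Perm (Fin r)) = r.factorial := by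
    rw [Fintype.card_perm, Fintype.card_fin]
  rw [← h1, ← card_univ]
  refine card_le_card_of_injOn (fun π i => (o (π i) : W)) ?_ ?_
  · intro π _
    have him : univ.image (fun i => (o (π i) : W)) = e := by
      ext a
      simp only [mem_image, mem_univ, true_and]
      constructor
      · rintro ⟨i, rfl⟩; exact (o (π i)).2
      · intro ha
        exact ⟨π.symm (o.symm ⟨a, ha⟩), by simp⟩
    simp [him, he]
  · intro π _ ρ _ h
    refine Equiv.ext fun i => ?_
    have := congrFun h i
    simpa using this

/-- Lower bound for the number of `(k - ℓ)`-tuples completing `U` to an edge. -/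
lemma card_link_tuples_le {N k ℓ : ℕ} {E : Finset (Finset (Fin N))}
    (hE : ∀ e ∈ E, e.card = k) {U : Finset (Fin N)} (hU : U.card = ℓ) :
    (k - ℓ).factorial * degS E U ≤ (univ.filter fun u : Fin (k - ℓ) → Fin N =>
      univ.image u ∈ (univ.powersetCard (k - ℓ)).filter fun f => U ∪ f ∈ E).card := by
  refine le_trans ?_ (factorial_mul_card_le fun e he =>
    (mem_powersetCard.1 (mem_filter.1 he).1).2)
  refine Nat.mul_le_mul_left _ ?_
  refine card_le_card_of_injOn (fun e => e \ U) ?_ ?_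
  · intro e he
    obtain ⟨he1, he2⟩ := mem_filter.1 (mem_coe.1 he)
    refine mem_coe.2 (mem_filter.2 ⟨mem_powersetCard.2 ⟨subset_univ _, ?_⟩, ?_⟩)
    · rw [card_sdiff_of_subset he2, hE e he1, hU]
    · rwa [union_sdiff_of_subset he2]
  · intro e he f hf h
    have he2 := (mem_filter.1 (mem_coe.1 he)).2
    have hf2 := (mem_filter.1 (mem_coe.1 hf)).2
    rw [← union_sdiff_of_subset he2, ← union_sdiff_of_subset hf2]
    simp only at h
    rw [h]

/-- `(N - ℓ)(N - ℓ - 1) ⋯ (N - ℓ - r + 1) ≥ (1 - η) N ^ r` for large `N`. -/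
lemma one_sub_mul_pow_le {N ℓ r : ℕ} {η : ℝ} (hN : ℓ + r ≤ N) (hN0 : 0 < N)
    (hNη : (r : ℝ) * (ℓ + r) ≤ η * N) :
    (1 - η) * (N : ℝ) ^ r ≤ (r.factorial : ℝ) * ((N - ℓ).choose r : ℝ) := by
  have hNr : (0 : ℝ) < N := by exact_mod_cast hN0
  have h1 : (N - (ℓ + r)) ^ r ≤ r.factorial * (N - ℓ).choose r := by
    rw [← Nat.descFactorial_eq_factorial_mul_choose]
    refine le_trans (Nat.pow_le_pow_left ?_ r) (Nat.pow_sub_le_descFactorial _ _)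
    omega
  have h2 : ((N : ℝ) - (ℓ + r)) ^ r ≤ (r.factorial : ℝ) * ((N - ℓ).choose r : ℝ) := by
    have : (((N - (ℓ + r)) ^ r : ℕ) : ℝ) ≤ ((r.factorial * (N - ℓ).choose r : ℕ) : ℝ) := by
      exact_mod_cast h1
    push_cast [Nat.cast_sub hN] at this
    exact this
  refine le_trans ?_ h2
  have hN' : ((ℓ : ℝ) + r) ≤ N := by exact_mod_cast hN
  have h3 : (N : ℝ) - (ℓ + r) = (1 + -((ℓ + r) / N)) * N := by field_simp; ring
  rw [h3, mul_pow]
  gcongr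
  have h4 : ((ℓ : ℝ) + r) / N ≤ 1 := by rw [div_le_one hNr]; exact hN'
  refine le_trans ?_ (one_add_mul_le_pow (by linarith) r)
  have h5 : (r : ℝ) * ((ℓ + r) / N) ≤ η := by
    rw [← mul_div_assoc, div_le_iff₀ hNr]; exact hNη
  linarith

/-- For a fixed `ℓ`-set `S` of indices, few tuples `x` are injective on `S` and induce a `k`-graph
in which `S` has small degree. -/
lemma card_bad_le {N M k ℓ : ℕ} (hk : ℓ ≤ k) {E : Finset (Finset (Fin N))}
    (hE : ∀ e ∈ E, e.card = k) {d η : ℝ} (hη : 0 < η) (hd : d ≤ 1) (hN0 : 0 < N)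
    (hN : k ≤ N) (hNη : ((k - ℓ : ℕ) : ℝ) * k ≤ η * N)
    (hdeg : ∀ U : Finset (Fin N), U.card = ℓ → d * ((N - ℓ).choose (k - ℓ) : ℝ) ≤ degS E U)
    {S : Finset (Fin M)} (hS : S.card = ℓ) :
    ((univ.filter fun x : Fin M → Fin N => Set.InjOn x S ∧
      (degS (pull k E x) S : ℝ) < (d - 2 * η) * (M - ℓ).choose (k - ℓ)).card : ℝ) ≤
      Real.exp (-(η ^ 2 / 4) * ((M - ℓ) / (k - ℓ) : ℕ)) * (N : ℝ) ^ M := by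
  classical
  set Bad := univ.filter fun x : Fin M → Fin N => Set.InjOn x S ∧
      (degS (pull k E x) S : ℝ) < (d - 2 * η) * (M - ℓ).choose (k - ℓ) with hBad
  let I := {i : Fin M // i ∉ S}
  have hℓM : ℓ ≤ M := by
    have := card_le_univ S
    rw [hS, Fintype.card_fin] at this
    exact this
  have hI : Fintype.card I = M - ℓ := by
    rw [Fintype.card_subtype_compl]
    simp [hS]
  set δ : ℝ := Real.exp (-(η ^ 2 / 4) * ((M - ℓ) / (k - ℓ) : ℕ)) * (N : ℝ) ^ (M - ℓ) with hδ
  have hfib : ∀ s : S → Fin N,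
      ((Bad.filter fun x => (fun i : S => x i) = s).card : ℝ) ≤ δ := by
    intro s
    rcases (Bad.filter fun x => (fun i : S => x i) = s).eq_empty_or_nonempty with h0 | ⟨x₀, hx₀⟩
    · rw [h0, card_empty, Nat.cast_zero]
      positivity
    set U := S.image x₀ with hU
    have hx₀' := mem_filter.1 hx₀
    have hUc : U.card = ℓ := by
      rw [hU, card_image_of_injOn (mem_filter.1 hx₀'.1).2.1, hS]
    have hUx : ∀ x ∈ Bad.filter fun x => (fun i : S => x i) = s, ∀ i ∈ S, x i = x₀ i := by
      intro x hx i hi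
      have h1 := congrFun ((mem_filter.1 hx).2.trans hx₀'.2.symm) ⟨i, hi⟩
      exact h1
    set 𝓛 := (univ.powersetCard (k - ℓ)).filter fun f => U ∪ f ∈ E with h𝓛
    have hμ : (d - η) * (Fintype.card (Fin N) : ℝ) ^ (k - ℓ) ≤
        ((univ.filter fun u : Fin (k - ℓ) → Fin N => univ.image u ∈ 𝓛).card : ℝ) := by
      rw [Fintype.card_fin]
      rcases le_or_gt d 0 with hd0 | hd0
      · refine le_trans (mul_nonpos_of_nonpos_of_nonneg (by linarith) (by positivity)) ?_
        positivity
      · have h1 : (((k - ℓ).factorial * degS E U : ℕ) : ℝ) ≤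
            ((univ.filter fun u : Fin (k - ℓ) → Fin N => univ.image u ∈ 𝓛).card : ℝ) := by
          exact_mod_cast card_link_tuples_le hE hUc
        refine le_trans ?_ h1
        have h2 := one_sub_mul_pow_le (N := N) (ℓ := ℓ) (r := k - ℓ) (η := η) (by omega) hN0 (by
          have : (ℓ : ℝ) + ((k - ℓ : ℕ) : ℝ) = k := by exact_mod_cast Nat.add_sub_cancel' hk
          rw [this]; exact hNη)
        have h3 := hdeg U hUc
        push_cast
        have h4 : (0 : ℝ) < (k - ℓ).factorial := by exact_mod_cast Nat.factorial_pos _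
        have h5 : d * ((1 - η) * (N : ℝ) ^ (k - ℓ)) ≤
            d * (((k - ℓ).factorial : ℝ) * ((N - ℓ).choose (k - ℓ) : ℝ)) := by gcongr
        have h6 : ((k - ℓ).factorial : ℝ) * (d * ((N - ℓ).choose (k - ℓ) : ℝ)) ≤
            (k - ℓ).factorial * degS E U := by gcongr
        have h7 : (d - η) * (N : ℝ) ^ (k - ℓ) ≤ d * ((1 - η) * (N : ℝ) ^ (k - ℓ)) := by
          have : 0 ≤ η * (1 - d) * (N : ℝ) ^ (k - ℓ) :=
            mul_nonneg (mul_nonneg hη.le (by linarith)) (by positivity)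
          nlinarith
        linarith
    have hmain := card_pull_le (I := I) 𝓛 hη (by linarith : d - η ≤ 1) hμ
    rw [hI, Fintype.card_fin] at hmain
    refine le_trans ?_ hmain
    rw [Nat.cast_le]
    refine card_le_card_of_injOn (fun x (i : I) => x i) ?_ ?_
    · intro x hx
      have hx' := mem_coe.1 hx
      refine mem_coe.2 (mem_filter.2 ⟨mem_univ _, ?_⟩)
      have hxd := (mem_filter.1 (mem_filter.1 hx').1).2.2
      have hle : (pull (k - ℓ) 𝓛 fun i : I => x i).card ≤ degS (pull k E x) S := by
        refine card_le_card_of_injOn (fun e => S ∪ e.map (Function.Embedding.subtype _)) ?_ ?_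
        · intro e he
          obtain ⟨he1, he2⟩ := mem_filter.1 (mem_coe.1 he)
          have hdis : Disjoint S (e.map (Function.Embedding.subtype _)) := by
            rw [disjoint_left]
            intro a ha hae
            obtain ⟨b, -, rfl⟩ := mem_map.1 hae
            exact b.2 ha
          refine mem_coe.2 (mem_filter.2 ⟨mem_filter.2 ⟨mem_powersetCard.2
            ⟨subset_univ _, ?_⟩, ?_⟩, subset_union_left⟩)
          · rw [card_union_of_disjoint hdis, card_map, hS, (mem_powersetCard.1 he1).2]
            omega
          · have h1 : S.image x = U := by
              rw [hU]
              exact image_congr fun i hi => hUx x hx' i hi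
            have h2 : (e.map (Function.Embedding.subtype _)).image x =
                e.image fun i : I => x i := by
              rw [map_eq_image, image_image]
              rfl
            rw [image_union, h1, h2]
            exact (mem_filter.1 he2).2
        · intro e _ f _ hef
          ext a
          have h1 : (a : Fin M) ∈ S ∪ e.map (Function.Embedding.subtype _) ↔
              (a : Fin M) ∈ S ∪ f.map (Function.Embedding.subtype _) := by
            simp only at hef
            rw [hef]
          simpa [a.2] using h1
      have hle' : ((pull (k - ℓ) 𝓛 fun i : I => x i).card : ℝ) ≤ degS (pull k E x) S := by
        exact_mod_cast hle
      have h8 : d - η - η = d - 2 * η := by ring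
      rw [h8]
      exact hle'.trans hxd.le
    · intro x hx y hy hxy
      funext i
      by_cases hi : i ∈ S
      · rw [hUx x (mem_coe.1 hx) i hi, hUx y (mem_coe.1 hy) i hi]
      · exact congrFun hxy ⟨i, hi⟩
  have hsum : (Bad.card : ℝ) =
      ∑ s : S → Fin N, ((Bad.filter fun x => (fun i : S => x i) = s).card : ℝ) := by
    exact_mod_cast card_eq_sum_card_fiberwise fun x _ => mem_coe.2 (mem_univ _)
  rw [hsum]
  refine (sum_le_card_nsmul _ _ _ fun s _ => hfib s).trans (le_of_eq ?_)
  rw [card_univ, Fintype.card_fun, Fintype.card_fin, Fintype.card_coe, hS, nsmul_eq_mul, hδ]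
  have : (N : ℝ) ^ M = (N : ℝ) ^ ℓ * (N : ℝ) ^ (M - ℓ) := by
    rw [← pow_add]; congr 1; omega
  rw [this]
  push_cast
  ring

lemma card_not_injective_le (M N : ℕ) :
    ((univ.filter fun x : Fin M → Fin N => ¬ Function.Injective x).card : ℝ) * N ≤
      (M : ℝ) ^ 2 * (N : ℝ) ^ M := by
  classical
  have hpair : ∀ ij : Fin M × Fin M, ij.1 ≠ ij.2 →
      (univ.filter fun x : Fin M → Fin N => x ij.1 = x ij.2).card * N ≤ N ^ M := by
    rintro ⟨i, j⟩ hij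
    have h1 : N ^ M = (univ : Finset (Fin M → Fin N)).card := by
      rw [card_univ, Fintype.card_fun, Fintype.card_fin, Fintype.card_fin]
    have h2 : (univ.filter fun x : Fin M → Fin N => x i = x j).card * N =
        ((univ.filter fun x : Fin M → Fin N => x i = x j) ×ˢ (univ : Finset (Fin N))).card := by
      rw [card_product, card_univ, Fintype.card_fin]
    rw [h1]
    simp only
    rw [h2]
    -- overwriting the coordinate `i`, which is recovered from the coordinate `j`
    refine card_le_card_of_injOn (fun q => Function.update q.1 i q.2)
      (fun _ _ => mem_coe.2 (mem_univ _)) ?_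
    rintro ⟨x, a⟩ hx ⟨y, b⟩ hy h
    have hx' := (mem_filter.1 (mem_product.1 (mem_coe.1 hx)).1).2
    have hy' := (mem_filter.1 (mem_product.1 (mem_coe.1 hy)).1).2
    simp only at h hx' hy'
    have hab : a = b := by simpa using congrFun h i
    have hne : ∀ l, l ≠ i → x l = y l := by
      intro l hl
      have := congrFun h l
      rwa [Function.update_of_ne hl, Function.update_of_ne hl] at this
    have hxy : x = y := by
      funext l
      by_cases hl : l = i
      · rw [hl, hx', hy', hne j (Ne.symm hij)]
      · exact hne l hl
    rw [hab, hxy]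
  have hsub : (univ.filter fun x : Fin M → Fin N => ¬ Function.Injective x) ⊆
      (univ.filter fun ij : Fin M × Fin M => ij.1 ≠ ij.2).biUnion fun ij =>
        univ.filter fun x : Fin M → Fin N => x ij.1 = x ij.2 := by
    intro x hx
    have := (mem_filter.1 hx).2
    simp only [Function.Injective, not_forall] at this
    obtain ⟨i, j, hij, hne⟩ := this
    exact mem_biUnion.2 ⟨(i, j), mem_filter.2 ⟨mem_univ _, hne⟩, mem_filter.2 ⟨mem_univ _, hij⟩⟩
  have h3 : (univ.filter fun x : Fin M → Fin N => ¬ Function.Injective x).card * N ≤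
      M ^ 2 * N ^ M := by
    refine (Nat.mul_le_mul_right N ((card_le_card hsub).trans card_biUnion_le)).trans ?_
    rw [sum_mul]
    refine (sum_le_card_nsmul _ _ _ fun ij hij => hpair ij (mem_filter.1 hij).2).trans ?_
    rw [smul_eq_mul]
    refine Nat.mul_le_mul_right _ ((card_le_univ _).trans ?_)
    simp [sq]
  exact_mod_cast h3

lemma exists_choose_mul_exp_le (ℓ r : ℕ) (hr : 0 < r) {c : ℝ} (hc : 0 < c) :
    ∃ M₀ : ℕ, ∀ M ≥ M₀,
      (M.choose ℓ : ℝ) * Real.exp (-c * ((M - ℓ) / r : ℕ)) ≤ 1 / 4 := by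
  have hr0 : (0 : ℝ) < r := by exact_mod_cast hr
  set a : ℝ := c / r with ha
  have ha0 : 0 < a := by positivity
  set D : ℝ := Real.exp (c * (ℓ + 1)) / a ^ ℓ with hD
  have h1 : Tendsto (fun M : ℕ => D * ((a * M) ^ ℓ * Real.exp (-(a * M)))) atTop (nhds (D * 0)) :=
    ((Real.tendsto_pow_mul_exp_neg_atTop_nhds_zero ℓ).comp
      (tendsto_natCast_atTop_atTop.const_mul_atTop ha0)).const_mul D
  rw [mul_zero] at h1
  obtain ⟨M₀, hM₀⟩ := eventually_atTop.1 (h1.eventually (gt_mem_nhds (by norm_num : (0:ℝ) < 1 / 4)))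
  refine ⟨M₀, fun M hM => le_trans ?_ (hM₀ M hM).le⟩
  have h2 : (M.choose ℓ : ℝ) ≤ (M : ℝ) ^ ℓ := by exact_mod_cast Nat.choose_le_pow M ℓ
  have h3 : (M : ℝ) / r - (ℓ + 1) ≤ ((M - ℓ) / r : ℕ) := by
    have h4 : M < r * ((M - ℓ) / r) + r + ℓ := by
      have := Nat.lt_mul_div_succ (M - ℓ) hr
      have h5 : r * ((M - ℓ) / r + 1) = r * ((M - ℓ) / r) + r := by ring
      omega
    have h6 : M ≤ r * ((M - ℓ) / r + ℓ + 1) := by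
      have : ℓ ≤ r * ℓ := Nat.le_mul_of_pos_left _ hr
      have h5 : r * ((M - ℓ) / r + ℓ + 1) = r * ((M - ℓ) / r) + r * ℓ + r := by ring
      omega
    have h7 : (M : ℝ) ≤ r * ((((M - ℓ) / r : ℕ) : ℝ) + ℓ + 1) := by exact_mod_cast h6
    have h8 : (M : ℝ) / r ≤ (((M - ℓ) / r : ℕ) : ℝ) + ℓ + 1 := by
      rw [div_le_iff₀ hr0]; linarith
    linarith
  have h9 : Real.exp (-c * ((M - ℓ) / r : ℕ)) ≤ Real.exp (c * (ℓ + 1)) * Real.exp (-(a * M)) := by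
    rw [← Real.exp_add, Real.exp_le_exp, ha]
    have : c * ((M : ℝ) / r - (ℓ + 1)) ≤ c * ((M - ℓ) / r : ℕ) := by gcongr
    have h10 : c / r * M = c * (M / r) := by ring
    rw [h10]
    linarith
  calc (M.choose ℓ : ℝ) * Real.exp (-c * ((M - ℓ) / r : ℕ))
      ≤ (M : ℝ) ^ ℓ * (Real.exp (c * (ℓ + 1)) * Real.exp (-(a * M))) := by gcongr
    _ = D * ((a * M) ^ ℓ * Real.exp (-(a * M))) := by
      rw [hD, mul_pow]
      field_simp

/-- Most samples of `M` vertices of a large `k`-graph are injective and inherit its minimum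
`ℓ`-degree density up to an error `η`. -/
lemma exists_samples {k ℓ : ℕ} (hk : ℓ < k) {η : ℝ} (hη : 0 < η) :
    ∃ M₀ : ℕ, ∀ M ≥ M₀, ∃ N₀ : ℕ, ∀ N ≥ N₀, ∀ E : Finset (Finset (Fin N)),
      (∀ e ∈ E, e.card = k) → ∀ d : ℝ, d ≤ 1 →
      (∀ U : Finset (Fin N), U.card = ℓ → d * ((N - ℓ).choose (k - ℓ) : ℝ) ≤ degS E U) →
      ∃ A : Finset (Fin M → Fin N), (N : ℝ) ^ M / 2 ≤ A.card ∧ ∀ x ∈ A, Function.Injective x ∧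
        ∀ S : Finset (Fin M), S.card = ℓ →
          (d - η) * ((M - ℓ).choose (k - ℓ) : ℝ) ≤ degS (pull k E x) S := by
  classical
  obtain ⟨M₀, hM₀⟩ := exists_choose_mul_exp_le ℓ (k - ℓ) (by omega)
    (by positivity : 0 < (η / 2) ^ 2 / 4)
  refine ⟨M₀, fun M hM => ⟨max (k + 1) (max (4 * M ^ 2) ⌈((k - ℓ : ℕ) : ℝ) * k / (η / 2)⌉₊),
    fun N hN E hE d hd hdeg => ?_⟩⟩
  have hNk : k + 1 ≤ N := (le_max_left _ _).trans hN
  have hNM : 4 * M ^ 2 ≤ N := ((le_max_left _ _).trans (le_max_right _ _)).trans hN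
  have hNη : ((k - ℓ : ℕ) : ℝ) * k ≤ η / 2 * N := by
    have h1 : ⌈((k - ℓ : ℕ) : ℝ) * k / (η / 2)⌉₊ ≤ N :=
      ((le_max_right _ _).trans (le_max_right _ _)).trans hN
    have h2 := Nat.ceil_le.1 h1
    rw [div_le_iff₀ (by positivity)] at h2
    linarith
  have hN0 : 0 < N := by omega
  have hNr : (0 : ℝ) < N := by exact_mod_cast hN0
  set P : ℝ := (N : ℝ) ^ M with hP
  let Bad : Finset (Fin M) → Finset (Fin M → Fin N) := fun S =>
    univ.filter fun x : Fin M → Fin N => Set.InjOn x S ∧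
      (degS (pull k E x) S : ℝ) < (d - 2 * (η / 2)) * (M - ℓ).choose (k - ℓ)
  let NI := univ.filter fun x : Fin M → Fin N => ¬ Function.Injective x
  let A := univ.filter fun x : Fin M → Fin N => Function.Injective x ∧
        ∀ S : Finset (Fin M), S.card = ℓ →
          (d - η) * ((M - ℓ).choose (k - ℓ) : ℝ) ≤ degS (pull k E x) S
  refine ⟨A, ?_, fun x hx => (mem_filter.1 hx).2⟩
  have hNI : (NI.card : ℝ) ≤ P / 4 := by
    have h1 := card_not_injective_le M N
    have h2 : (4 : ℝ) * (M : ℝ) ^ 2 ≤ N := by exact_mod_cast hNM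
    refine le_of_mul_le_mul_right ?_ hNr
    refine h1.trans ?_
    have hP0 : 0 ≤ P := by positivity
    nlinarith
  have hBad : (∑ S ∈ univ.powersetCard ℓ, ((Bad S).card : ℝ)) ≤ P / 4 := by
    refine (sum_le_card_nsmul _ _ _ fun S hS => card_bad_le hk.le hE (half_pos hη) hd hN0
      (by omega) hNη hdeg (mem_powersetCard.1 hS).2).trans ?_
    rw [card_powersetCard, card_univ, Fintype.card_fin, nsmul_eq_mul, ← mul_assoc]
    have h1 := hM₀ M hM
    have hP0 : 0 ≤ P := by positivity
    calc _ ≤ 1 / 4 * P := by gcongr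
      _ = P / 4 := by ring
  have hcover : (univ : Finset (Fin M → Fin N)) ⊆
      A ∪ (NI ∪ (univ.powersetCard ℓ).biUnion Bad) := by
    intro x _
    by_cases hxA : x ∈ A
    · exact mem_union_left _ hxA
    refine mem_union_right _ ?_
    by_cases hxi : Function.Injective x
    · refine mem_union_right _ ?_
      have h1 : ¬ ∀ S : Finset (Fin M), S.card = ℓ →
          (d - η) * ((M - ℓ).choose (k - ℓ) : ℝ) ≤ degS (pull k E x) S :=
        fun h => hxA (mem_filter.2 ⟨mem_univ _, hxi, h⟩)
      push Not at h1
      obtain ⟨S, hS, hlt⟩ := h1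
      refine mem_biUnion.2 ⟨S, mem_powersetCard.2 ⟨subset_univ _, hS⟩, mem_filter.2
        ⟨mem_univ _, hxi.injOn, ?_⟩⟩
      rwa [mul_div_cancel₀ η two_ne_zero]
    · exact mem_union_left _ (mem_filter.2 ⟨mem_univ _, hxi⟩)
  have hcount : P ≤ A.card + (NI.card + ∑ S ∈ univ.powersetCard ℓ, ((Bad S).card : ℝ)) := by
    have h1 := (card_le_card hcover).trans ((card_union_le _ _).trans (Nat.add_le_add_left
      ((card_union_le _ _).trans (Nat.add_le_add_left card_biUnion_le _)) _))
    rw [card_univ, Fintype.card_fun, Fintype.card_fin, Fintype.card_fin] at h1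
    rw [hP]
    exact_mod_cast h1
  linarith

/-! ### Existence of the degree Turán density -/

lemma degS_le_choose {N k ℓ : ℕ} {E : Finset (Finset (Fin N))} (hE : ∀ e ∈ E, e.card = k)
    {U : Finset (Fin N)} (hU : U.card = ℓ) : degS E U ≤ (N - ℓ).choose (k - ℓ) := by
  have h1 : (Uᶜ.powersetCard (k - ℓ)).card = (N - ℓ).choose (k - ℓ) := by
    rw [card_powersetCard, card_compl, Fintype.card_fin, hU]
  rw [← h1]
  refine card_le_card_of_injOn (fun e => e \ U) ?_ ?_
  · intro e he
    obtain ⟨he1, he2⟩ := mem_filter.1 (mem_coe.1 he)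
    refine mem_coe.2 (mem_powersetCard.2 ⟨fun a ha => ?_, ?_⟩)
    · exact mem_compl.2 (mem_sdiff.1 ha).2
    · rw [card_sdiff_of_subset he2, hE e he1, hU]
  · intro e he f hf h
    have he2 := (mem_filter.1 (mem_coe.1 he)).2
    have hf2 := (mem_filter.1 (mem_coe.1 hf)).2
    rw [← union_sdiff_of_subset he2, ← union_sdiff_of_subset hf2]
    simp only at h
    rw [h]

lemma minDeg_le_degS {N ℓ : ℕ} (E : Finset (Finset (Fin N))) {S : Finset (Fin N)}
    (hS : S.card = ℓ) : minDeg ℓ univ E ≤ degS E S :=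
  Nat.sInf_le ⟨S, subset_univ _, hS, rfl⟩

lemma exists_degS_eq_minDeg {N ℓ : ℕ} (hN : ℓ ≤ N) (E : Finset (Finset (Fin N))) :
    ∃ S : Finset (Fin N), S.card = ℓ ∧ minDeg ℓ univ E = degS E S := by
  obtain ⟨S₀, -, hS₀⟩ := exists_subset_card_eq (s := (univ : Finset (Fin N))) (n := ℓ)
    (by rwa [card_univ, Fintype.card_fin])
  have hne : {d | ∃ S ⊆ (univ : Finset (Fin N)), S.card = ℓ ∧ d = degS E S}.Nonempty :=
    ⟨_, S₀, subset_univ _, hS₀, rfl⟩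
  obtain ⟨S, -, hS, h⟩ := Nat.sInf_mem hne
  exact ⟨S, hS, h⟩

lemma minDeg_le_choose {N k ℓ : ℕ} (hN : ℓ ≤ N) {E : Finset (Finset (Fin N))}
    (hE : ∀ e ∈ E, e.card = k) : minDeg ℓ univ E ≤ (N - ℓ).choose (k - ℓ) := by
  obtain ⟨S, hS, h⟩ := exists_degS_eq_minDeg hN E
  rw [h]
  exact degS_le_choose hE hS

lemma minDeg_le_exDeg {N k ℓ : ℕ} (hN : ℓ ≤ N) {V : Finset ℕ} {F : Finset (Finset ℕ)}
    {E : Finset (Finset (Fin N))} (hE : ∀ e ∈ E, e.card = k)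
    (hF : ¬ ContainsCopy V F univ E) : minDeg ℓ univ E ≤ exDeg k ℓ N V F := by
  refine le_csSup ⟨(N - ℓ).choose (k - ℓ), ?_⟩ ⟨E, hE, hF, rfl⟩
  rintro d ⟨E', hE', -, rfl⟩
  exact minDeg_le_choose hN hE'

/-- The positivity hypothesis excludes the case that no `F`-free `k`-graph exists, where `exDeg` is
the supremum of the empty set. -/
lemma exists_extremal {N k ℓ : ℕ} (hN : ℓ ≤ N) {V : Finset ℕ} {F : Finset (Finset ℕ)}
    (hpos : 0 < exDeg k ℓ N V F) : ∃ E : Finset (Finset (Fin N)), (∀ e ∈ E, e.card = k) ∧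
      ¬ ContainsCopy V F univ E ∧ exDeg k ℓ N V F = minDeg ℓ univ E := by
  refine Nat.sSup_mem (s := {d | ∃ E : Finset (Finset (Fin N)), (∀ e ∈ E, e.card = k) ∧
    ¬ ContainsCopy V F (univ : Finset (Fin N)) E ∧ d = minDeg ℓ univ E}) ?_
    ⟨(N - ℓ).choose (k - ℓ), ?_⟩
  · rw [Set.nonempty_iff_ne_empty]
    intro h
    rw [exDeg, h, csSup_empty] at hpos
    exact lt_irrefl _ hpos
  · rintro d ⟨E', hE', -, rfl⟩
    exact minDeg_le_choose hN hE'

lemma exDeg_le_choose {N k ℓ : ℕ} (hN : ℓ ≤ N) (V : Finset ℕ) (F : Finset (Finset ℕ)) :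
    exDeg k ℓ N V F ≤ (N - ℓ).choose (k - ℓ) := by
  rcases Nat.eq_zero_or_pos (exDeg k ℓ N V F) with h | h
  · rw [h]; exact Nat.zero_le _
  · obtain ⟨E, hE, -, h⟩ := exists_extremal hN h
    rw [h]
    exact minDeg_le_choose hN hE

lemma card_of_mem_pull {M N k : ℕ} {E : Finset (Finset (Fin N))} {x : Fin M → Fin N} :
    ∀ e ∈ pull k E x, e.card = k :=
  fun _ he => (mem_powersetCard.1 (mem_filter.1 he).1).2

lemma containsCopy_of_pull {M N k : ℕ} {V : Finset ℕ} {F : Finset (Finset ℕ)}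
    {E : Finset (Finset (Fin N))} {x : Fin M → Fin N} (hx : Function.Injective x)
    (h : ContainsCopy V F univ (pull k E x)) : ContainsCopy V F univ E := by
  obtain ⟨f, hf, -, hfe⟩ := h
  refine ⟨x ∘ f, hx.comp_injOn hf, fun _ _ => mem_univ _, fun e he => ?_⟩
  rw [← image_image]
  exact (mem_filter.1 (hfe e he)).2

/-- The normalised extremal numbers are almost decreasing: a suitable sample of an extremal
`k`-graph on `N` vertices is an `F`-free `k`-graph on `M` vertices of almost the same density. -/
lemma exDeg_almost_antitone {k ℓ : ℕ} (hk : ℓ < k) (V : Finset ℕ) (F : Finset (Finset ℕ))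
    {η : ℝ} (hη : 0 < η) : ∃ M₀ : ℕ, ∀ M ≥ M₀, ∃ N₀ : ℕ, ∀ N ≥ N₀,
      (exDeg k ℓ N V F : ℝ) / ((N - ℓ).choose (k - ℓ) : ℝ) - η ≤
        (exDeg k ℓ M V F : ℝ) / ((M - ℓ).choose (k - ℓ) : ℝ) := by
  obtain ⟨M₀, hM₀⟩ := exists_samples hk hη
  refine ⟨max M₀ k, fun M hM => ?_⟩
  have hMk : k ≤ M := (le_max_right _ _).trans hM
  obtain ⟨N₀, hN₀⟩ := hM₀ M ((le_max_left _ _).trans hM)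
  refine ⟨max N₀ k, fun N hN => ?_⟩
  have hNk : k ≤ N := (le_max_right _ _).trans hN
  have hCM : (0 : ℝ) < ((M - ℓ).choose (k - ℓ) : ℝ) := by
    exact_mod_cast Nat.choose_pos (by omega)
  have hCN : (0 : ℝ) < ((N - ℓ).choose (k - ℓ) : ℝ) := by
    exact_mod_cast Nat.choose_pos (by omega)
  rcases Nat.eq_zero_or_pos (exDeg k ℓ N V F) with h0 | hpos
  · have : (0 : ℝ) ≤ (exDeg k ℓ M V F : ℝ) / ((M - ℓ).choose (k - ℓ) : ℝ) := by positivity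
    rw [h0, Nat.cast_zero, zero_div]
    linarith
  obtain ⟨E, hE, hF, hEd⟩ := exists_extremal (by omega : ℓ ≤ N) hpos
  have hd1 : (exDeg k ℓ N V F : ℝ) / ((N - ℓ).choose (k - ℓ) : ℝ) ≤ 1 := by
    rw [div_le_one hCN]
    exact_mod_cast exDeg_le_choose (by omega : ℓ ≤ N) V F
  obtain ⟨A, hA, hAx⟩ := hN₀ N ((le_max_left _ _).trans hN) E hE _ hd1 (fun U hU => by
    rw [div_mul_cancel₀ _ hCN.ne', hEd]
    exact_mod_cast minDeg_le_degS E hU)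
  have hA0 : A.Nonempty := by
    rw [← card_pos]
    have h1 : (0 : ℝ) < N := by
      have : 0 < N := by omega
      exact_mod_cast this
    have h2 : (0 : ℝ) < A.card := lt_of_lt_of_le (by positivity) hA
    exact_mod_cast h2
  obtain ⟨x, hx⟩ := hA0
  obtain ⟨hxi, hxd⟩ := hAx x hx
  obtain ⟨S, hS, hSd⟩ := exists_degS_eq_minDeg (by omega : ℓ ≤ M) (pull k E x)
  have h1 := minDeg_le_exDeg (by omega : ℓ ≤ M) (card_of_mem_pull (k := k) (E := E) (x := x))
    (fun h => hF (containsCopy_of_pull hxi h))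
  rw [le_div_iff₀ hCM]
  refine (hxd S hS).trans ?_
  rw [hSd] at h1
  exact_mod_cast h1

lemma exists_tendsto_of_almost_antitone {a : ℕ → ℝ} (h0 : ∀ n, 0 ≤ a n) (h1 : ∀ n, a n ≤ 1)
    (h : ∀ η : ℝ, 0 < η → ∃ M₀ : ℕ, ∀ M ≥ M₀, ∃ N₀ : ℕ, ∀ N ≥ N₀, a N - η ≤ a M) :
    ∃ x, Tendsto a atTop (nhds x) := by
  have hle : IsBoundedUnder (· ≤ ·) atTop a := isBoundedUnder_of ⟨1, h1⟩
  have hge : IsBoundedUnder (· ≥ ·) atTop a := isBoundedUnder_of ⟨0, h0⟩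
  refine ⟨liminf a atTop, tendsto_of_le_liminf_of_limsup_le le_rfl ?_ hle hge⟩
  refine le_of_forall_pos_le_add fun η hη => ?_
  obtain ⟨M₀, hM₀⟩ := h η hη
  rw [← sub_le_iff_le_add]
  refine le_liminf_of_le hle.isCoboundedUnder_ge (eventually_atTop.2 ⟨M₀, fun M hM => ?_⟩)
  rw [sub_le_iff_le_add]
  obtain ⟨N₀, hN₀⟩ := hM₀ M hM
  refine limsup_le_of_le hge.isCoboundedUnder_le (eventually_atTop.2 ⟨N₀, fun N hN => ?_⟩)
  linarith [hN₀ N hN]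

lemma exists_hasTuranDensity {k ℓ : ℕ} (hk : ℓ < k) (V : Finset ℕ) (F : Finset (Finset ℕ)) :
    ∃ x, HasTuranDensity k ℓ V F x := by
  refine exists_tendsto_of_almost_antitone (fun n => by positivity) (fun n => ?_)
    fun η hη => exDeg_almost_antitone hk V F hη
  rcases le_or_gt ℓ n with hn | hn
  · refine div_le_one_of_le₀ ?_ (Nat.cast_nonneg _)
    exact_mod_cast exDeg_le_choose hn V F
  · rw [Nat.choose_eq_zero_of_lt (by omega), Nat.cast_zero, div_zero]
    exact zero_le_one

/-! ### The product of all flexible hypergraphs -/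

/-- The edges containing `S` and a further vertex `u` form a small proportion of all `k`-sets
containing `S`, so positive degree density forces an edge through `S` avoiding `u`. -/
lemma flexible_of_degS {M k ℓ : ℕ} (hk : ℓ < k) (hM : k ≤ M) {c : ℝ}
    (hc : ((k - ℓ : ℕ) : ℝ) < c * (M - ℓ : ℕ)) {G : Finset (Finset (Fin M))}
    (hG : ∀ e ∈ G, e.card = k)
    (hdeg : ∀ S : Finset (Fin M), S.card = ℓ →
      c * ((M - ℓ).choose (k - ℓ) : ℝ) ≤ degS G S) : Flexible k ℓ G := by
  refine ⟨hG, fun S u hS hu => ?_⟩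
  by_contra! hno
  have h1 : degS G S ≤ degS G (insert u S) := by
    refine card_le_card fun e he => ?_
    obtain ⟨he1, he2⟩ := mem_filter.1 he
    exact mem_filter.2 ⟨he1, insert_subset (hno e he1 he2) he2⟩
  have h2 : degS G (insert u S) ≤ (M - (ℓ + 1)).choose (k - (ℓ + 1)) :=
    degS_le_choose hG (by rw [card_insert_of_notMem hu, hS])
  have h3 : (M - ℓ) * (M - (ℓ + 1)).choose (k - (ℓ + 1)) =
      (M - ℓ).choose (k - ℓ) * (k - ℓ) := by
    obtain ⟨m, hm⟩ : ∃ m, M - ℓ = m + 1 := ⟨M - ℓ - 1, by omega⟩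
    obtain ⟨r, hr⟩ : ∃ r, k - ℓ = r + 1 := ⟨k - ℓ - 1, by omega⟩
    rw [hm, hr, show M - (ℓ + 1) = m by omega, show k - (ℓ + 1) = r by omega]
    exact Nat.add_one_mul_choose_eq m r
  have hC : (0 : ℝ) < ((M - ℓ).choose (k - ℓ) : ℝ) := by
    exact_mod_cast Nat.choose_pos (by omega)
  have h4 : c * ((M - ℓ).choose (k - ℓ) : ℝ) ≤ ((M - (ℓ + 1)).choose (k - (ℓ + 1)) : ℝ) :=
    (hdeg S hS).trans (by exact_mod_cast h1.trans h2)
  have h5 : ((M - ℓ : ℕ) : ℝ) * ((M - (ℓ + 1)).choose (k - (ℓ + 1)) : ℝ) =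
      ((M - ℓ).choose (k - ℓ) : ℝ) * ((k - ℓ : ℕ) : ℝ) := by exact_mod_cast h3
  have h6 := mul_le_mul_of_nonneg_left h4 (Nat.cast_nonneg (α := ℝ) (M - ℓ))
  rw [h5] at h6
  nlinarith

lemma flexible_complete {M k ℓ : ℕ} (hk : ℓ < k) (hM : k < M) :
    Flexible k ℓ ((univ : Finset (Fin M)).powersetCard k) := by
  refine ⟨fun e he => (mem_powersetCard.1 he).2, fun S u hS hu => ?_⟩
  obtain ⟨e, he1, he2, he3⟩ := exists_subsuperset_card_eq (s := S) (t := univ.erase u) (n := k)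
    (subset_erase.2 ⟨subset_univ _, hu⟩) (by omega)
    (by rw [card_erase_of_mem (mem_univ _), card_univ, Fintype.card_fin]; omega)
  exact ⟨e, mem_powersetCard.2 ⟨subset_univ _, he3⟩, he1, fun h => notMem_erase u univ (he2 h)⟩

/-- The vertices of a product can be labelled by natural numbers. -/
lemma exists_labelling (W : Type*) [Fintype W] [Nonempty W] :
    ∃ (V : Finset ℕ) (p : ℕ → W), ∀ w, ∃ v ∈ V, p v = w := by
  obtain ⟨p, hp⟩ := exists_surjective_nat W
  choose q hq using hp
  exact ⟨univ.image q, p, fun w => ⟨q w, mem_image_of_mem _ (mem_univ _), hq w⟩⟩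

/-- The extremal number of the product of all flexible `k`-graphs on `M` vertices is small when `M`
is large. -/
lemma exists_exDeg_prod_le {k ℓ : ℕ} (hk : ℓ < k) {δ : ℝ} (hδ : 0 < δ) (hδ1 : δ ≤ 1) :
    ∃ M₀ : ℕ, ∀ M ≥ M₀, ∀ (𝒞 : Finset (Finset (Finset (Fin M)))),
      (∀ G, Flexible k ℓ G → G ∈ 𝒞) →
      ∀ (V : Finset ℕ) (p : ℕ → Finset (Finset (Fin M)) → Fin M), ∃ N₀ : ℕ, ∀ N ≥ N₀,
        (exDeg k ℓ N V (prodEdges k 𝒞 V p) : ℝ) / ((N - ℓ).choose (k - ℓ) : ℝ) ≤ δ := by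
  obtain ⟨M₀, hM₀⟩ := exists_samples hk (half_pos hδ)
  obtain ⟨m, hm⟩ := exists_nat_gt (((k - ℓ : ℕ) : ℝ) / (δ / 2))
  refine ⟨max M₀ (max k (m + ℓ)), fun M hM 𝒞 h𝒞 V p => ?_⟩
  have hMk : k ≤ M := ((le_max_left _ _).trans (le_max_right _ _)).trans hM
  have hMm : m + ℓ ≤ M := ((le_max_right _ _).trans (le_max_right _ _)).trans hM
  have hc : ((k - ℓ : ℕ) : ℝ) < (δ / 2) * (M - ℓ : ℕ) := by
    rw [div_lt_iff₀ (half_pos hδ)] at hm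
    have h1 : (m : ℝ) ≤ (M - ℓ : ℕ) := by
      have : m ≤ M - ℓ := by omega
      exact_mod_cast this
    nlinarith
  obtain ⟨N₁, hN₁⟩ := hM₀ M ((le_max_left _ _).trans hM)
  obtain ⟨N₂, hN₂⟩ := containsCopy_prod (k := k) 𝒞 V p
  refine ⟨max N₁ (max N₂ k), fun N hN => ?_⟩
  have hN1 : N₁ ≤ N := (le_max_left _ _).trans hN
  have hN2 : N₂ ≤ N := ((le_max_left _ _).trans (le_max_right _ _)).trans hN
  have hNk : k ≤ N := ((le_max_right _ _).trans (le_max_right _ _)).trans hN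
  have hCN : (0 : ℝ) < ((N - ℓ).choose (k - ℓ) : ℝ) := by
    exact_mod_cast Nat.choose_pos (by omega)
  by_contra! hlt
  rw [lt_div_iff₀ hCN] at hlt
  have hpos : 0 < exDeg k ℓ N V (prodEdges k 𝒞 V p) := by
    have : (0 : ℝ) < exDeg k ℓ N V (prodEdges k 𝒞 V p) := lt_trans (by positivity) hlt
    exact_mod_cast this
  obtain ⟨E, hE, hF, hEd⟩ := exists_extremal (by omega : ℓ ≤ N) hpos
  obtain ⟨A, hA, hAx⟩ := hN₁ N hN1 E hE δ hδ1 (fun U hU => by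
    refine hlt.le.trans ?_
    rw [hEd]
    exact_mod_cast minDeg_le_degS E hU)
  refine hF (hN₂ N hN2 E A hA fun x hx => ⟨(hAx x hx).1, h𝒞 _ ?_⟩)
  refine flexible_of_degS hk hMk hc card_of_mem_pull fun S hS => ?_
  have := (hAx x hx).2 S hS
  rwa [sub_half] at this

/-- For `2 ≤ ℓ ≤ k - 1` and every `ε > 0`, there is a `k`-graph `F` with
`π_ℓ(F) < ε` admitting no `ℓ`-vanishing order. -/
theorem stmt_18 (k ℓ : ℕ) (hℓ : 2 ≤ ℓ) (hℓk : ℓ ≤ k - 1) (ε : ℝ) (hε : 0 < ε) :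
    ∃ (V : Finset ℕ) (E : Finset (Finset ℕ)) (x : ℝ),
      IsKGraph k V E ∧ HasTuranDensity k ℓ V E x ∧ x < ε ∧
      ¬ ∃ σ : ℕ → ℕ, IsVanishingOrder ℓ V E σ := by
  classical
  have hk : ℓ < k := by omega
  have hε' : 0 < min ε 1 := lt_min hε one_pos
  have hle : min ε 1 / 2 ≤ 1 := by linarith [min_le_right ε 1]
  obtain ⟨M₀, hM₀⟩ := exists_exDeg_prod_le hk (half_pos hε') hle
  let M := max M₀ (k + 1)
  have hMk : k < M := le_max_right M₀ (k + 1)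
  let 𝒞 : Finset (Finset (Finset (Fin M))) := univ.filter fun G => Flexible k ℓ G
  have : Nonempty (Fin M) := ⟨⟨0, by omega⟩⟩
  obtain ⟨V, p, hp⟩ := exists_labelling (Finset (Finset (Fin M)) → Fin M)
  obtain ⟨x, hx⟩ := exists_hasTuranDensity hk V (prodEdges k 𝒞 V p)
  obtain ⟨N₀, hN₀⟩ := hM₀ M (le_max_left _ _) 𝒞 (fun G hG => mem_filter.2 ⟨mem_univ _, hG⟩) V p
  refine ⟨V, prodEdges k 𝒞 V p, x, ?_, hx, ?_, ?_⟩
  · exact fun e he => mem_powersetCard.1 (mem_filter.1 he).1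
  · have h1 : x ≤ min ε 1 / 2 := le_of_tendsto hx (eventually_atTop.2 ⟨N₀, hN₀⟩)
    linarith [min_le_left ε 1]
  · rintro ⟨σ, hσ⟩
    exact prod_not_vanishing hℓ hk (hk.trans hMk) (fun G hG => (mem_filter.1 hG).2)
      ⟨_, mem_filter.2 ⟨mem_univ _, flexible_complete hk hMk⟩⟩ hp σ hσ
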